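/- arXiv:2302.05365 — 9 statements merged into one kernel-verified Lean document; each statement's English description precedes it below -/
import Mathlib

section
/- Let n ≥ 1 and k ≥ 1 be integers and let Q_{n,k} ∈ ℚ[t] be as in the context, with coefficients q_d (the coefficient of t^d). Then Q_{n,k} has degree at most nk+1 (i.e. q_d = 0 for all d > nk+1), and its coefficients are antisymmetric with respect to the degree: q_d = −q_{nk+1−d} for all 0 ≤ d ≤ nk+1. -/
/-!
Every factor `1 - X ^ m` with `m ≥ 1` is anti-palindromic: reversing its coefficients negates it.
Reversal is multiplicative over a domain, so the product of the `k - 1` factors of the denominator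
changes by `(-1) ^ (k - 1)` and the product of the `k` factors of the numerator by `(-1) ^ k`.
Cancelling the denominator gives `Q.reverse = -Q`, and counting degrees gives
`Q.natDegree = n * k + 1`; both claims are read off from these two facts.
-/

open Polynomial in
lemma natDegree_one_sub_X_pow (m : ℕ) : (1 - (X : ℚ[X]) ^ m).natDegree = m := by
  rw [← natDegree_neg, neg_sub, ← C_1, natDegree_X_pow_sub_C]

open Polynomial in
lemma reverse_one_sub_X_pow (m : ℕ) (hm : 1 ≤ m) :
    (1 - (X : ℚ[X]) ^ m).reverse = -(1 - (X : ℚ[X]) ^ m) := by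
  ext d
  rw [coeff_reverse, natDegree_one_sub_X_pow]
  simp only [coeff_neg, coeff_sub, coeff_one, coeff_X_pow]
  by_cases hd : d ≤ m
  · rw [revAt_le hd]
    split_ifs <;> first | omega | norm_num
  · rw [revAt_eq_self_of_lt (by omega)]
    split_ifs <;> first | omega | norm_num

open Polynomial in
lemma prod_one_sub_X_pow (s : Finset ℕ) (f : ℕ → ℕ) (hf : ∀ i ∈ s, 1 ≤ f i) :
    (∏ i ∈ s, (1 - (X : ℚ[X]) ^ f i)) ≠ 0 ∧
    (∏ i ∈ s, (1 - (X : ℚ[X]) ^ f i)).natDegree = ∑ i ∈ s, f i ∧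
    (∏ i ∈ s, (1 - (X : ℚ[X]) ^ f i)).reverse =
      (-1) ^ s.card * ∏ i ∈ s, (1 - (X : ℚ[X]) ^ f i) := by
  have hne : ∀ i ∈ s, (1 - (X : ℚ[X]) ^ f i) ≠ 0 := fun i hi h => by
    have h1 := natDegree_one_sub_X_pow (f i)
    have h2 := hf i hi
    rw [h, natDegree_zero] at h1
    omega
  refine ⟨Finset.prod_ne_zero_iff.mpr hne, ?_, ?_⟩
  · rw [natDegree_prod _ _ hne]
    exact Finset.sum_congr rfl fun i _ => natDegree_one_sub_X_pow _
  · clear hne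
    induction s using Finset.induction_on with
    | empty => simpa using reverse_C (1 : ℚ)
    | insert a s ha ih =>
      rw [Finset.prod_insert ha, reverse_mul_of_domain,
        ih fun i hi => hf i (Finset.mem_insert_of_mem hi),
        reverse_one_sub_X_pow _ (hf a (Finset.mem_insert_self a s)), Finset.card_insert_of_notMem ha]
      ring

/-- Let `n ≥ 1`, `k ≥ 1`, and let `Q = Q_{n,k} ∈ ℚ[t]` be the quotient of
`∏_{i=1}^{k} (1 - t^{n+i})` by `∏_{i=2}^{k} (1 - t^i)`.  Then `Q` has degree at most `nk+1`
(its coefficients `q_d` vanish for `d > nk+1`) and its coefficients are antisymmetric with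
respect to the degree: `q_d = -q_{nk+1-d}` for `0 ≤ d ≤ nk+1`. -/
theorem kloosterman_Q_antisymmetric (n k : ℕ) (hn : 1 ≤ n) (hk : 1 ≤ k) (Q : Polynomial ℚ)
    (hQ : Q * ∏ i ∈ Finset.Icc 2 k, (1 - (Polynomial.X : Polynomial ℚ) ^ i) =
      ∏ i ∈ Finset.Icc 1 k, (1 - (Polynomial.X : Polynomial ℚ) ^ (n + i))) :
    (∀ d : ℕ, n * k + 1 < d → Q.coeff d = 0) ∧
    (∀ d : ℕ, d ≤ n * k + 1 → Q.coeff d = -Q.coeff (n * k + 1 - d)) := by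
  obtain ⟨hD0, hDd, hDr⟩ := prod_one_sub_X_pow (Finset.Icc 2 k) (fun i => i)
    (fun i hi => by have := (Finset.mem_Icc.mp hi).1; omega)
  obtain ⟨hN0, hNd, hNr⟩ := prod_one_sub_X_pow (Finset.Icc 1 k) (fun i => n + i)
    (fun i _ => by omega)
  rw [← hQ] at hN0 hNd hNr
  have hQ0 : Q ≠ 0 := left_ne_zero_of_mul hN0
  have hsum : ∑ i ∈ Finset.Icc 1 k, i = 1 + ∑ i ∈ Finset.Icc 2 k, i := by
    rw [← Finset.add_sum_Ioc_eq_sum_Icc hk]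
    -- `Ioc 1 k` and `Icc 2 k` agree definitionally on `ℕ`.
    rfl
  have hdeg : Q.natDegree = n * k + 1 := by
    rw [Polynomial.natDegree_mul hQ0 hD0, hDd, Finset.sum_add_distrib, hsum] at hNd
    simp only [Finset.sum_const, Nat.card_Icc, smul_eq_mul, Nat.add_sub_cancel] at hNd
    rw [mul_comm] at hNd
    omega
  have hrev : Q.reverse = -Q := by
    rw [Polynomial.reverse_mul_of_domain, hDr, Nat.card_Icc, Nat.card_Icc] at hNr
    obtain ⟨j, rfl⟩ : ∃ j, k = j + 1 := ⟨k - 1, by omega⟩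
    have e1 : j + 1 + 1 - 2 = j := by omega
    have e2 : j + 1 + 1 - 1 = j + 1 := by omega
    rw [e1, e2] at hNr
    refine mul_right_cancel₀ (mul_ne_zero (pow_ne_zero j (neg_ne_zero.mpr one_ne_zero)) hD0) ?_
    rw [hNr]
    ring
  refine ⟨fun d hd => Polynomial.coeff_eq_zero_of_natDegree_lt (hdeg ▸ hd), fun d hd => ?_⟩
  have h := congrArg (fun p => p.coeff (n * k + 1 - d)) hrev
  simp only [Polynomial.coeff_reverse, hdeg, Polynomial.coeff_neg] at h
  rwa [Polynomial.revAt_le (Nat.sub_le _ _), Nat.sub_sub_self hd] at h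
end

section
/- Let n ≥ 1 and k ≥ 1 be integers. For every d ∈ ℕ, the coefficient of t^d in Q_{n,k} equals r_{d,k} − r_{d−1,k} (as rational numbers, after casting the natural numbers r_{d,k} to ℚ). Equivalently, the generating identity (1−t)/((1−x)(1−t·x)⋯(1−t^n·x)) = Σ_{k≥0} Q_{n,k}(t)·x^k holds coefficientwise. -/
/-!
Let `G n k = ∑ t ^ (∑ i * I i)`, summed over the tuples `I : Fin (n + 1) → ℕ` of total `k`, so that
the coefficients of `G n k` are the numbers `r_{d,k}`. This is a Gaussian binomial:
`G n k * ∏_{i=1}^k (1 - t ^ i) = ∏_{i=1}^k (1 - t ^ (n + i))` (`kloostermanG_mul_prod`).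
Splitting off `I₀` and shifting the remaining indices gives `G (n + 1) k = ∑_{b ≤ k} t ^ b * G n b`,
hence `G (n + 1) (k + 1) = G (n + 1) k + t ^ (k + 1) * G n (k + 1)`, and the product formula follows
by induction on `n` and `k`. Cancelling `∏_{i=2}^k (1 - t ^ i)` yields `Q = (1 - t) * G n k`, whose
coefficients are the differences `r_{d,k} - r_{d-1,k}`.
-/

/-- `r_{d,k}`: the number of tuples `(I₀, …, I_n) ∈ ℕ^{n+1}` with `I₀ + ⋯ + I_n = k` and
`I₁ + 2I₂ + ⋯ + n·I_n = d`.  The index `d` ranges over `ℤ`, so that `r_{d,k} = 0` for `d < 0`. -/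
noncomputable def kloostermanR (n k : ℕ) (d : ℤ) : ℕ :=
  Nat.card {I : Fin (n + 1) → ℕ //
    (∑ i, I i) = k ∧ ((∑ i : Fin (n + 1), (i : ℕ) * I i : ℕ) : ℤ) = d}

open Polynomial

/-- The generating polynomial of `kloostermanR n k`: the sum of `X ^ (I₁ + 2I₂ + ⋯ + n·I_n)` over
the tuples `(I₀, …, I_n)` of total `k`. -/
noncomputable def kloostermanG (n k : ℕ) : ℚ[X] :=
  ∑ I ∈ Finset.Nat.antidiagonalTuple (n + 1) k, X ^ (∑ i : Fin (n + 1), (i : ℕ) * I i)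

lemma kloostermanG_coeff (n k d : ℕ) :
    (kloostermanG n k).coeff d = (kloostermanR n k d : ℚ) := by
  classical
  have h : kloostermanR n k d = ((Finset.Nat.antidiagonalTuple (n + 1) k).filter
      (fun I => d = ∑ i : Fin (n + 1), (i : ℕ) * I i)).card := by
    unfold kloostermanR
    rw [← Nat.card_eq_finsetCard]
    refine Nat.card_congr (Equiv.subtypeEquivRight fun I => ?_)
    rw [Finset.mem_filter, Finset.Nat.mem_antidiagonalTuple, Nat.cast_inj, eq_comm (a := d)]
  rw [h, kloostermanG, finsetSum_coeff]
  simp only [coeff_X_pow, Finset.sum_boole]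

lemma kloostermanR_of_neg (n k : ℕ) {d : ℤ} (hd : d < 0) : kloostermanR n k d = 0 := by
  have : IsEmpty {I : Fin (n + 1) → ℕ //
      (∑ i, I i) = k ∧ ((∑ i : Fin (n + 1), (i : ℕ) * I i : ℕ) : ℤ) = d} :=
    ⟨fun I => by have := I.2.2; omega⟩
  exact Nat.card_of_isEmpty

lemma kloostermanG_zero_left (k : ℕ) : kloostermanG 0 k = 1 := by
  simp [kloostermanG]

lemma kloostermanG_zero_right (n : ℕ) : kloostermanG n 0 = 1 := by
  simp [kloostermanG, Finset.Nat.antidiagonalTuple_zero_right]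

/-- Splitting off `I₀ = k - b`: shifting the indices of the remaining entries, which add up to `b`,
lowers the weight by `b`. -/
lemma kloostermanG_succ_left (n k : ℕ) :
    kloostermanG (n + 1) k = ∑ b ∈ Finset.range (k + 1), X ^ b * kloostermanG n b := by
  have key : kloostermanG (n + 1) k =
      ∑ p ∈ Finset.HasAntidiagonal.antidiagonal k, X ^ p.2 * kloostermanG n p.2 := by
    simp only [kloostermanG, Finset.mul_sum, Finset.sum_sigma']
    symm
    refine Finset.sum_bij' (fun x _ => (Fin.cons x.1.1 x.2 : Fin (n + 2) → ℕ))
      (fun I _ => ⟨(I 0, ∑ i, Fin.tail I i), Fin.tail I⟩) ?_ ?_ ?_ ?_ ?_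
    · rintro ⟨⟨a, b⟩, J⟩ h
      simp only [Finset.mem_sigma, Finset.HasAntidiagonal.mem_antidiagonal,
        Finset.Nat.mem_antidiagonalTuple] at h ⊢
      simp only [Fin.sum_univ_succ (n := n + 1), Fin.cons_zero, Fin.cons_succ, h.2, h.1]
    · intro I h
      simp only [Finset.mem_sigma, Finset.HasAntidiagonal.mem_antidiagonal,
        Finset.Nat.mem_antidiagonalTuple, and_true] at h ⊢
      rw [Fin.sum_univ_succ] at h
      exact h
    · rintro ⟨⟨a, b⟩, J⟩ h
      simp only [Finset.mem_sigma, Finset.Nat.mem_antidiagonalTuple] at h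
      simp [h.2]
    · intro I h
      simp
    · rintro ⟨⟨a, b⟩, J⟩ h
      simp only [Finset.mem_sigma, Finset.Nat.mem_antidiagonalTuple] at h
      simp only [Fin.sum_univ_succ (n := n + 1), Fin.cons_zero, Fin.cons_succ, Fin.val_zero,
        Fin.val_succ, add_mul, Finset.sum_add_distrib, one_mul, zero_mul, zero_add, h.2,
        ← pow_add, add_comm]
  rw [key, ← Finset.Nat.sum_antidiagonal_swap, Finset.Nat.sum_antidiagonal_eq_sum_range_succ_mk]
  rfl

lemma kloostermanG_succ_succ (n k : ℕ) :
    kloostermanG (n + 1) (k + 1) =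
      kloostermanG (n + 1) k + X ^ (k + 1) * kloostermanG n (k + 1) := by
  rw [kloostermanG_succ_left, Finset.sum_range_succ, ← kloostermanG_succ_left]

/-- `kloostermanG n k` is the Gaussian binomial coefficient `[n + k choose k]`. -/
lemma kloostermanG_mul_prod (n k : ℕ) :
    kloostermanG n k * ∏ i ∈ Finset.range k, (1 - (X : ℚ[X]) ^ (i + 1)) =
      ∏ i ∈ Finset.range k, (1 - (X : ℚ[X]) ^ (n + (i + 1))) := by
  induction n generalizing k with
  | zero => simp [kloostermanG_zero_left]
  | succ n ihn =>
    induction k with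
    | zero => simp [kloostermanG_zero_right]
    | succ k ihk =>
      have h := ihn (k + 1)
      -- The right side of `h` shares all factors but the first with the product for `(n + 1, k)`.
      rw [Finset.prod_range_succ' (fun i => 1 - (X : ℚ[X]) ^ (n + (i + 1)))] at h
      have e : ∀ i, n + (i + 1 + 1) = n + 1 + (i + 1) := fun i => by ring
      simp only [e] at h
      rw [Finset.prod_range_succ] at h
      rw [kloostermanG_succ_succ, Finset.prod_range_succ, Finset.prod_range_succ, ← ihk]
      rw [← ihk] at h
      linear_combination (X : ℚ[X]) ^ (k + 1) * h

/-- For `n ≥ 1`, `k ≥ 1`, and `Q = Q_{n,k}` the quotient of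
`∏_{i=1}^{k}(1 - t^{n+i})` by `∏_{i=2}^{k}(1 - t^i)`, the coefficient of `t^d` in `Q`
equals `r_{d,k} - r_{d-1,k}` (as rational numbers). -/
theorem kloosterman_Q_coeff_eq_r_sub_r (n k : ℕ) (hn : 1 ≤ n) (hk : 1 ≤ k) (Q : Polynomial ℚ)
    (hQ : Q * ∏ i ∈ Finset.Icc 2 k, (1 - (Polynomial.X : Polynomial ℚ) ^ i) =
      ∏ i ∈ Finset.Icc 1 k, (1 - (Polynomial.X : Polynomial ℚ) ^ (n + i))) :
    ∀ d : ℕ, Q.coeff d = (kloostermanR n k d : ℚ) - (kloostermanR n k ((d : ℤ) - 1) : ℚ) := by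
  have hIcc : ∀ f : ℕ → ℚ[X], ∏ i ∈ Finset.Icc 1 k, f i = ∏ i ∈ Finset.range k, f (i + 1) := by
    intro f
    rw [Finset.range_eq_Ico, Finset.prod_Ico_add' f 0 k 1]
    rfl
  have hG := kloostermanG_mul_prod n k
  rw [← hIcc (fun i => 1 - (X : ℚ[X]) ^ i), ← hIcc (fun i => 1 - (X : ℚ[X]) ^ (n + i)), ← hQ,
    ← Finset.mul_prod_Ioc_eq_prod_Icc hk] at hG
  have hIoc : Finset.Ioc 1 k = Finset.Icc 2 k := rfl
  rw [hIoc] at hG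
  have hne : ∏ i ∈ Finset.Icc 2 k, (1 - (X : ℚ[X]) ^ i) ≠ 0 := by
    rw [Finset.prod_ne_zero_iff]
    intro i hi h
    have hi' : i ≠ 0 := by have := (Finset.mem_Icc.mp hi).1; omega
    have := congrArg (eval 0) h
    simp [hi'] at this
  have hQG : Q = (1 - X) * kloostermanG n k := by
    apply mul_right_cancel₀ hne
    rw [← hG]
    ring
  intro d
  rw [hQG, sub_mul, one_mul, coeff_sub, kloostermanG_coeff]
  cases d with
  | zero => simp [kloostermanR_of_neg]
  | succ d =>
    rw [coeff_X_mul, kloostermanG_coeff]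
    simp
end

section
/- Let n ≥ 1 and k ≥ 1 be integers with gcd(k, n+1) = 1. Then for any two integers j₁ and j₂, the number of tuples (I₀, …, I_n) ∈ ℕ^{n+1} with I₀ + ⋯ + I_n = k and I₁ + 2I₂ + ⋯ + n·I_n ≡ j₁ (mod n+1) equals the number of such tuples with I₁ + 2I₂ + ⋯ + n·I_n ≡ j₂ (mod n+1). (Equivalently, the polynomial r_k(t) = Σ_d r_{d,k} t^d is divisible by 1 + t + ⋯ + t^n in ℚ[t], i.e. the formal power series h_k(t) = r_k(t)/(1 + t + ⋯ + t^n) is a polynomial.) -/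
/-!
Rotating a tuple, `I ↦ (i ↦ I (i - c))` with indices read modulo `n + 1`, preserves its sum `k` and
changes its weight `∑ i * I i` by `c * k` modulo `n + 1` (`weight_rotate`). Since `k` is invertible
modulo `n + 1`, a suitable `c` gives a bijection from the tuples of weight `j₁` to those of
weight `j₂`.
-/

/-- Rotating by `c` shifts the weight modulo `n + 1` by `c` times the sum of the tuple. -/
lemma weight_rotate (n : ℕ) (c : Fin (n + 1)) (I : Fin (n + 1) → ℕ) :
    ((∑ i : Fin (n + 1), (i : ℕ) * I ((Equiv.addRight c).symm i) : ℕ) : ZMod (n + 1)) =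
      ((∑ i : Fin (n + 1), (i : ℕ) * I i : ℕ) : ZMod (n + 1)) +
        ((c : ℕ) : ZMod (n + 1)) * ((∑ i, I i : ℕ) : ZMod (n + 1)) := by
  rw [← Equiv.sum_comp (Equiv.addRight c)]
  simp only [Equiv.symm_apply_apply]
  simp only [Equiv.coe_addRight, Fin.val_add]
  push_cast
  simp only [ZMod.natCast_mod, Nat.cast_add, add_mul, Finset.sum_add_distrib, Finset.mul_sum]

/-- Let `n ≥ 1`, `k ≥ 1` with `gcd(k, n+1) = 1`.  For any integers `j₁, j₂`,
the number of tuples `(I₀, …, I_n) ∈ ℕ^{n+1}` with `I₀ + ⋯ + I_n = k` and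
`I₁ + 2I₂ + ⋯ + n·I_n ≡ j₁ (mod n+1)` equals the number of such tuples with
`I₁ + 2I₂ + ⋯ + n·I_n ≡ j₂ (mod n+1)`. -/
theorem kloosterman_count_equidistributed_mod (n k : ℕ) (hn : 1 ≤ n) (hk : 1 ≤ k)
    (hgcd : Nat.gcd k (n + 1) = 1) :
    ∀ j₁ j₂ : ℕ,
      Nat.card {I : Fin (n + 1) → ℕ //
        (∑ i, I i) = k ∧ (∑ i : Fin (n + 1), (i : ℕ) * I i) % (n + 1) = j₁ % (n + 1)} =
      Nat.card {I : Fin (n + 1) → ℕ //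
        (∑ i, I i) = k ∧ (∑ i : Fin (n + 1), (i : ℕ) * I i) % (n + 1) = j₂ % (n + 1)} := by
  intro j₁ j₂
  have hu : (k : ZMod (n + 1)) * (k : ZMod (n + 1))⁻¹ = 1 := ZMod.coe_mul_inv_eq_one k hgcd
  -- The rotation amount `c = (j₂ - j₁) / k` modulo `n + 1`.
  obtain ⟨c, hc⟩ : ∃ c : Fin (n + 1),
      ((c : ℕ) : ZMod (n + 1)) * k = (j₂ : ZMod (n + 1)) - j₁ := by
    let z : ZMod (n + 1) := ((j₂ : ZMod (n + 1)) - j₁) * (k : ZMod (n + 1))⁻¹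
    refine ⟨⟨z.val, z.val_lt⟩, ?_⟩
    simp only [ZMod.natCast_zmod_val, z]
    rw [mul_assoc, mul_comm _ (k : ZMod (n + 1)), hu, mul_one]
  refine Nat.card_congr
    (Equiv.subtypeEquiv (Equiv.arrowCongr (Equiv.addRight c) (Equiv.refl ℕ)) fun I => ?_)
  have hsum : ∑ i, I ((Equiv.addRight c).symm i) = ∑ i, I i :=
    Equiv.sum_comp (Equiv.addRight c).symm I
  have hw := weight_rotate n c I
  simp only [Equiv.arrowCongr_apply, Function.comp_apply, Equiv.refl_apply,
    ← ZMod.natCast_eq_natCast_iff']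
  rw [hsum, hw]
  refine and_congr_right fun h => ?_
  rw [h, hc]
  constructor
  · intro h'
    rw [h']
    ring
  · intro h'
    linear_combination h'
end

section
/- Let k ≥ 1 and let 0 ≤ d ≤ k be integers. In the case n = 2, define N_{d,k} as the number of tuples (a, I₀, I₁, I₂) ∈ ℕ⁴ with I₀ + I₁ + I₂ = k and 3a + I₁ + 2I₂ = d (with N_{d,k} = 0 for d < 0). Then n_{d,k} := N_{d,k} − N_{d−1,k} equals ⌊d/6⌋ if d ≡ 1 (mod 6), and equals ⌊d/6⌋ + 1 otherwise. -/
/-!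
Since `d ≤ k`, a tuple of weight `d - 1` has `I₀ ≥ 1`, and moving one unit from `I₀` to `I₁` is a
bijection onto the tuples of weight `d` with `I₁ ≥ 1` (`kloostermanTuplesEquiv`). Hence
`N_{d,k} - N_{d-1,k}` counts the tuples of weight `d` with `I₁ = 0`, that is, the pairs `(a, c)` of
natural numbers with `3a + 2c = d`. These are parametrized by `a = d % 2 + 2j`, which gives the
stated number (`twoThreePairsEquivFin`).
-/

/-- In the case `n = 2`: `N_{d,k}` is the number of tuples `(a, I₀, I₁, I₂) ∈ ℕ⁴` with
`I₀ + I₁ + I₂ = k` and `3a + I₁ + 2I₂ = d`.  The index `d` ranges over `ℤ`, so that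
`N_{d,k} = 0` for `d < 0`. -/
noncomputable def kloostermanN₂ (k : ℕ) (d : ℤ) : ℕ :=
  Nat.card {p : ℕ × ℕ × ℕ × ℕ //
    p.2.1 + p.2.2.1 + p.2.2.2 = k ∧
    ((3 * p.1 + p.2.2.1 + 2 * p.2.2.2 : ℕ) : ℤ) = d}

/-- Tuples with `I₁ = 0` in the count of `N_{d,k}`, recorded by `(a, I₂)`; when `d ≤ k` the
entry `I₀ = k - I₂` is determined and nonnegative. -/
abbrev TwoThreePairs (d : ℕ) : Type := {q : ℕ × ℕ // 3 * q.1 + 2 * q.2 = d}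

/-- The tuples counted by `N_{d,k}`. -/
abbrev KloostermanTuples (k : ℕ) (d : ℤ) : Type :=
  {p : ℕ × ℕ × ℕ × ℕ //
    p.2.1 + p.2.2.1 + p.2.2.2 = k ∧
    ((3 * p.1 + p.2.2.1 + 2 * p.2.2.2 : ℕ) : ℤ) = d}

lemma finite_kloostermanTuples (k : ℕ) (d : ℤ) : Finite (KloostermanTuples k d) := by
  refine Set.Finite.subset (Set.finite_Iic ((d.toNat, k, k, k) : ℕ × ℕ × ℕ × ℕ)) ?_
  rintro ⟨a, x, y, z⟩ ⟨h1, h2⟩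
  simp only [Set.mem_Iic, Prod.mk_le_mk] at *
  omega

/-- The parity of `a` in `3a + 2c = d` is that of `d`, so `a = d % 2 + 2j`, where `j` ranges over
the values with `3 (d % 2) + 6 j ≤ d`. -/
def twoThreePairsEquivFin (d : ℕ) :
    Fin (if d % 6 = 1 then d / 6 else d / 6 + 1) ≃ TwoThreePairs d where
  toFun j := ⟨(d % 2 + 2 * j, (d - 3 * (d % 2) - 6 * j) / 2), by
    have := j.2
    split_ifs at this <;> dsimp only <;> omega⟩
  invFun q := ⟨q.1.1 / 2, by
    have := q.2
    split_ifs <;> omega⟩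
  left_inv j := by
    ext
    dsimp only
    omega
  right_inv := by
    rintro ⟨⟨a, c⟩, h⟩
    dsimp only at h
    simp only [Subtype.mk.injEq, Prod.mk.injEq]
    omega

/-- Trading one unit of `I₀` for one unit of `I₁` identifies the tuples of weight `d - 1` with those
of weight `d` having `I₁ ≥ 1`. The hypothesis `d ≤ k` guarantees `I₀ ≥ 1` in weight `d - 1`. -/
def kloostermanTuplesEquiv (k d : ℕ) (hd : d ≤ k) :
    KloostermanTuples k ((d : ℤ) - 1) ⊕ TwoThreePairs d ≃ KloostermanTuples k d where
  toFun
    | .inl ⟨(a, x, y, z), h⟩ => ⟨(a, x - 1, y + 1, z), by dsimp only at *; omega⟩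
    | .inr ⟨(a, c), h⟩ => ⟨(a, k - c, 0, c), by dsimp only at *; omega⟩
  invFun
    | ⟨(a, _, 0, z), h⟩ => .inr ⟨(a, z), by dsimp only at *; omega⟩
    | ⟨(a, x, y + 1, z), h⟩ => .inl ⟨(a, x + 1, y, z), by dsimp only at *; omega⟩
  left_inv := by
    rintro (⟨⟨a, x, y, z⟩, h⟩ | ⟨⟨a, c⟩, h⟩)
    · dsimp only at h
      simp only [Sum.inl.injEq, Subtype.mk.injEq, Prod.mk.injEq, true_and, and_true]
      omega
    · rfl
  right_inv := by
    rintro ⟨⟨a, x, _ | y, z⟩, h⟩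
    · dsimp only at h
      simp only [Subtype.mk.injEq, Prod.mk.injEq, true_and, and_true]
      omega
    · rfl

/-- For `k ≥ 1` and `0 ≤ d ≤ k`, in the case `n = 2` one has
`n_{d,k} := N_{d,k} - N_{d-1,k} = ⌊d/6⌋` if `d ≡ 1 (mod 6)` and `⌊d/6⌋ + 1` otherwise. -/
theorem kloosterman_n_formula_n_two (k : ℕ) (hk : 1 ≤ k) (d : ℕ) (hd : d ≤ k) :
    (kloostermanN₂ k d : ℤ) - kloostermanN₂ k ((d : ℤ) - 1) =
      if d % 6 = 1 then ((d / 6 : ℕ) : ℤ) else ((d / 6 : ℕ) : ℤ) + 1 := by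
  have := finite_kloostermanTuples k ((d : ℤ) - 1)
  have : Finite (TwoThreePairs d) := Finite.of_equiv _ (twoThreePairsEquivFin d)
  have h := Nat.card_congr (kloostermanTuplesEquiv k d hd)
  rw [Nat.card_sum, ← Nat.card_congr (twoThreePairsEquivFin d), Nat.card_fin] at h
  change kloostermanN₂ k ((d : ℤ) - 1) + _ = kloostermanN₂ k d at h
  rw [← h]
  split_ifs <;> push_cast <;> ring
end

section
/- Let n ≥ 1 and k ≥ 1 be integers, and fix a primitive (n+1)-th root of unity ζ ∈ ℂ. The map D : P_k → P_k is injective if and only if there is no tuple I = (I₀, …, I_n) ∈ ℕ^{n+1} with I₀ + ⋯ + I_n = k and Σ_{i=0}^{n} I_i·ζ^i = 0. In particular, if n+1 is a prime number, then D is injective on P_k if and only if (n+1) does not divide k. -/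
/-!
The derivation `D` acts on the span of the `x_i` with characteristic polynomial `λ^(n+1) - z`, so
it becomes diagonalizable after adjoining `t` with `t^(n+1) = z`: the linear form
`y_j = ∑_i (ζ^j t)^(n-i) x_i` satisfies `D y_j = ζ^j t y_j`. A monomial `y^I` is then an eigenvector
of eigenvalue `t · ∑ I_j ζ^j`, and the monomials with `|I| = k` span the forms of degree `k` after
inverting `t`. Hence `D` has a kernel in degree `k` over `ℂ[t]` exactly when some eigenvalue is zero.

No localization is needed. `toEigen` embeds `P_k` into `ℂ[t][Y]`, intertwining `D` with the diagonal
derivation (`toEigen_kloostermanD`); injectivity comes from `fromEigen_toEigen`, the composite with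
`Y_j ↦ y_j` being base change to `ℂ[t]` followed by multiplication by `((n+1) t^n)^k`. In the other direction, a kernel element `y^I`
over `ℂ[t]` is brought down to `ℂ[z]` by taking a nonzero component with respect to the powers of
`t` (`descend_baseChangeD`, `exists_descend_ne_zero`).

For `n+1` prime the relations `∑ I_i ζ^i = 0` are governed by the cyclotomic polynomial, whose value
at `1` is `n+1` (`exists_relation_iff_dvd`).
-/

open MvPolynomial

/-- The `ℂ[z]`-linear derivation `D` on `ℂ[z][x₀, …, x_n]` with `D(x_i) = x_{i+1}` for
`0 ≤ i ≤ n-1` and `D(x_n) = z·x₀`. -/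
noncomputable def kloostermanD (n : ℕ) :
    Derivation (Polynomial ℂ) (MvPolynomial (Fin (n + 1)) (Polynomial ℂ))
      (MvPolynomial (Fin (n + 1)) (Polynomial ℂ)) :=
  MvPolynomial.mkDerivation (Polynomial ℂ) fun i =>
    if h : (i : ℕ) + 1 < n + 1 then MvPolynomial.X ⟨(i : ℕ) + 1, h⟩
    else MvPolynomial.C Polynomial.X * MvPolynomial.X 0

/-! ### Derivations and the diagonal model -/

/-- A ring homomorphism that sends constants to constants and intertwines two derivations on the
variables intertwines them everywhere. -/
lemma ringHom_comp_derivation {σ τ R S : Type*} [CommRing R] [CommRing S]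
    (h : MvPolynomial σ R →+* MvPolynomial τ S)
    (d₁ : Derivation R (MvPolynomial σ R) (MvPolynomial σ R))
    (d₂ : Derivation S (MvPolynomial τ S) (MvPolynomial τ S))
    (hC : ∀ a, ∃ b, h (C a) = C b) (hX : ∀ i, h (d₁ (X i)) = d₂ (h (X i)))
    (p : MvPolynomial σ R) : h (d₁ p) = d₂ (h p) := by
  induction p using MvPolynomial.induction_on with
  | C a =>
    obtain ⟨b, hb⟩ := hC a
    rw [hb, derivation_C, derivation_C, map_zero]
  | add p q hp hq => simp only [map_add, hp, hq]
  | mul_X p i hp =>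
    simp only [Derivation.leibniz, map_mul, map_add, smul_eq_mul, hp, hX]

/-- The diagonal derivation `E` on `ℂ[t][Y₀, …, Y_n]` with `E(Y_j) = ζ^j t · Y_j`. Here `t` is a
formal `(n+1)`-st root of `z`; as a type, `ℂ[t]` is again `Polynomial ℂ`. -/
noncomputable def eigenDerivation (n : ℕ) (ζ : ℂ) :
    Derivation (Polynomial ℂ) (MvPolynomial (Fin (n + 1)) (Polynomial ℂ))
      (MvPolynomial (Fin (n + 1)) (Polynomial ℂ)) :=
  mkDerivation (Polynomial ℂ) fun j => C (Polynomial.C (ζ ^ (j : ℕ)) * Polynomial.X) * X j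

lemma eigenDerivation_monomial (n : ℕ) (ζ : ℂ) (s : Fin (n + 1) →₀ ℕ) (a : Polynomial ℂ) :
    eigenDerivation n ζ (monomial s a) =
      monomial s (Polynomial.C (∑ i : Fin (n + 1), (s i : ℂ) * ζ ^ (i : ℕ)) *
        Polynomial.X * a) := by
  rw [eigenDerivation, mkDerivation_monomial, Finsupp.sum_fintype _ _ (by simp), map_sum,
    Finset.sum_mul, Finset.sum_mul, map_sum, Finset.smul_sum]
  refine Finset.sum_congr rfl fun i _ => ?_
  by_cases hi : s i = 0
  · simp [hi]
  have hs : s - Finsupp.single i 1 + Finsupp.single i 1 = s :=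
    tsub_add_cancel_of_le (by simpa [Nat.one_le_iff_ne_zero] using hi)
  rw [X, C_mul_monomial, smul_eq_mul, monomial_mul, hs, smul_monomial]
  congr 1
  simp
  ring

lemma coeff_eigenDerivation (n : ℕ) (ζ : ℂ) (s : Fin (n + 1) →₀ ℕ)
    (p : MvPolynomial (Fin (n + 1)) (Polynomial ℂ)) :
    coeff s (eigenDerivation n ζ p) =
      Polynomial.C (∑ i : Fin (n + 1), (s i : ℂ) * ζ ^ (i : ℕ)) * Polynomial.X * coeff s p := by
  induction p using MvPolynomial.induction_on' with
  | monomial u a =>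
    rw [eigenDerivation_monomial]
    by_cases h : u = s
    · simp [h]
    · simp [coeff_monomial, h]
  | add p q hp hq => simp only [map_add, coeff_add, hp, hq, mul_add]

/-! ### Changes of coordinates -/

/-- The ring homomorphism `ℂ[z][x] → ℂ[t][Y]` with `z ↦ t^(n+1)` and
`x_i ↦ ∑_j ζ^(j(i+1)) t^i Y_j`: up to a scalar, it writes `x_i` in the eigencoordinates. -/
noncomputable def toEigen (n : ℕ) (ζ : ℂ) :
    MvPolynomial (Fin (n + 1)) (Polynomial ℂ) →+* MvPolynomial (Fin (n + 1)) (Polynomial ℂ) :=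
  eval₂Hom (C.comp (Polynomial.expand ℂ (n + 1) : Polynomial ℂ →+* Polynomial ℂ)) fun i =>
    ∑ j : Fin (n + 1),
      C (Polynomial.C (ζ ^ ((j : ℕ) * (i + 1))) * Polynomial.X ^ (i : ℕ)) * X j

/-- The `ℂ[t]`-algebra homomorphism `ℂ[t][Y] → ℂ[t][x]` sending `Y_j` to the eigenvector
`∑_i (ζ^j t)^(n-i) x_i` of `D`, of eigenvalue `ζ^j t`. -/
noncomputable def fromEigen (n : ℕ) (ζ : ℂ) :
    MvPolynomial (Fin (n + 1)) (Polynomial ℂ) →+* MvPolynomial (Fin (n + 1)) (Polynomial ℂ) :=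
  eval₂Hom C fun j => ∑ i : Fin (n + 1),
    C (Polynomial.C (ζ ^ ((j : ℕ) * (n - i))) * Polynomial.X ^ (n - (i : ℕ))) * X i

/-- The base change `ℂ[z][x] → ℂ[t][x]` along `z ↦ t^(n+1)`. -/
noncomputable def baseChange (n : ℕ) :
    MvPolynomial (Fin (n + 1)) (Polynomial ℂ) →+* MvPolynomial (Fin (n + 1)) (Polynomial ℂ) :=
  MvPolynomial.map (Polynomial.expand ℂ (n + 1) : Polynomial ℂ →+* Polynomial ℂ)

/-- The `ℂ[t]`-linear extension of `D` to `ℂ[t][x]`. -/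
noncomputable def baseChangeD (n : ℕ) :
    Derivation (Polynomial ℂ) (MvPolynomial (Fin (n + 1)) (Polynomial ℂ))
      (MvPolynomial (Fin (n + 1)) (Polynomial ℂ)) :=
  mkDerivation (Polynomial ℂ) fun i => baseChange n (kloostermanD n (X i))

lemma baseChange_kloostermanD (n : ℕ) (p : MvPolynomial (Fin (n + 1)) (Polynomial ℂ)) :
    baseChange n (kloostermanD n p) = baseChangeD n (baseChange n p) := by
  apply ringHom_comp_derivation
  · intro a
    exact ⟨_, map_C _ a⟩
  · intro i
    rw [show baseChange n (X i) = X i from map_X _ i, baseChangeD, mkDerivation_X]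

lemma kloostermanD_X (n : ℕ) (i : Fin (n + 1)) : kloostermanD n (X i) =
    if h : (i : ℕ) + 1 < n + 1 then MvPolynomial.X ⟨(i : ℕ) + 1, h⟩
    else MvPolynomial.C Polynomial.X * MvPolynomial.X 0 := by
  rw [kloostermanD, mkDerivation_X]

lemma toEigen_kloostermanD (n : ℕ) {ζ : ℂ} (hζ : ζ ^ (n + 1) = 1)
    (p : MvPolynomial (Fin (n + 1)) (Polynomial ℂ)) :
    toEigen n ζ (kloostermanD n p) = eigenDerivation n ζ (toEigen n ζ p) := by
  apply ringHom_comp_derivation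
  · intro a
    exact ⟨_, eval₂Hom_C _ _ a⟩
  · intro i
    have hX : ∀ i : Fin (n + 1), toEigen n ζ (X i) = ∑ j : Fin (n + 1),
      C (Polynomial.C (ζ ^ ((j : ℕ) * (i + 1))) * Polynomial.X ^ (i : ℕ)) * X j :=
      fun i => eval₂Hom_X' _ _ i
    have hE : ∀ j : Fin (n + 1), eigenDerivation n ζ (X j) =
        C (Polynomial.C (ζ ^ (j : ℕ)) * Polynomial.X) * X j := fun j => mkDerivation_X _ _ _
    rw [kloostermanD_X]
    split_ifs with h
    · rw [hX, hX, map_sum]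
      refine Finset.sum_congr rfl fun j _ => ?_
      rw [Derivation.leibniz, derivation_C, smul_zero, add_zero, hE, smul_eq_mul, ← mul_assoc,
        ← C_mul]
      congr 2
      simp only [pow_add, pow_mul, map_mul, mul_add]
      simp
      ring
    · have hi : (i : ℕ) = n := by omega
      rw [map_mul, hX, hX, map_sum, Finset.mul_sum, hi]
      refine Finset.sum_congr rfl fun j _ => ?_
      rw [Derivation.leibniz, derivation_C, smul_zero, add_zero, hE, smul_eq_mul, ← mul_assoc,
        ← mul_assoc, ← C_mul, toEigen, eval₂Hom_C]
      rw [RingHom.comp_apply, ← C_mul]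
      congr 2
      have : ζ ^ ((j : ℕ) * (n + 1)) = 1 := by rw [mul_comm, pow_mul, hζ, one_pow]
      simp [this]
      ring

lemma fromEigen_X (n : ℕ) (ζ : ℂ) (j : Fin (n + 1)) : fromEigen n ζ (X j) =
    ∑ i : Fin (n + 1),
      C (Polynomial.C (ζ ^ ((j : ℕ) * (n - i))) * Polynomial.X ^ (n - (i : ℕ))) * X i :=
  eval₂Hom_X' _ _ j

lemma fromEigen_C (n : ℕ) (ζ : ℂ) (a : Polynomial ℂ) : fromEigen n ζ (C a) = C a :=
  eval₂Hom_C _ _ a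

lemma baseChangeD_X (n : ℕ) (i : Fin (n + 1)) : baseChangeD n (X i) =
    if h : (i : ℕ) + 1 < n + 1 then MvPolynomial.X ⟨(i : ℕ) + 1, h⟩
    else MvPolynomial.C (Polynomial.X ^ (n + 1)) * MvPolynomial.X 0 := by
  rw [baseChangeD, mkDerivation_X, kloostermanD_X]
  split_ifs
  · exact map_X _ _
  · simp [baseChange]

lemma fromEigen_eigenDerivation (n : ℕ) {ζ : ℂ} (hζ : ζ ^ (n + 1) = 1)
    (p : MvPolynomial (Fin (n + 1)) (Polynomial ℂ)) :
    fromEigen n ζ (eigenDerivation n ζ p) = baseChangeD n (fromEigen n ζ p) := by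
  apply ringHom_comp_derivation
  · intro a
    exact ⟨_, fromEigen_C n ζ a⟩
  · intro j
    have hE : eigenDerivation n ζ (X j) =
        C (Polynomial.C (ζ ^ (j : ℕ)) * Polynomial.X) * X j := mkDerivation_X _ _ _
    have hj : ζ ^ ((j : ℕ) * (n + 1)) = 1 := by rw [mul_comm, pow_mul, hζ, one_pow]
    rw [hE, map_mul, fromEigen_C, fromEigen_X, map_sum, Finset.mul_sum]
    simp only [Derivation.leibniz, derivation_C, smul_eq_mul, mul_zero, add_zero, baseChangeD_X]
    -- The `x₀`-term on the left matches the `x_n`-term on the right, and `x_{i+1}` matches `x_i`.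
    rw [Fin.sum_univ_succ, Fin.sum_univ_castSucc]
    refine (add_comm _ _).trans (congrArg₂ (· + ·) ?_ ?_)
    · refine Finset.sum_congr rfl fun i _ => ?_
      rw [dif_pos (by simp), ← mul_assoc, ← C_mul]
      have h : n - (i : ℕ) = (n - (i + 1)) + 1 := by omega
      congr 2
      simp only [Fin.val_succ, Fin.val_castSucc, h, mul_add, pow_add, map_mul]
      simp
      ring
    · rw [dif_neg (by simp), ← mul_assoc, ← mul_assoc, ← C_mul, ← C_mul]
      congr 2
      simp only [mul_add, pow_add, mul_one] at hj
      simp only [Fin.val_zero, Fin.val_last, tsub_zero, tsub_self, mul_zero, pow_zero, pow_succ]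
      have hC := congrArg Polynomial.C hj
      rw [Polynomial.C_mul] at hC
      linear_combination (Polynomial.X * Polynomial.X ^ n) * hC

/-- Orthogonality of the characters of `ℤ/(n+1)`: the two changes of coordinates are inverse to each
other up to the scalar `(n+1) t^n`. -/
lemma fromEigen_toEigen_X (n : ℕ) {ζ : ℂ} (hζ : IsPrimitiveRoot ζ (n + 1)) (i : Fin (n + 1)) :
    fromEigen n ζ (toEigen n ζ (X i)) =
      C (Polynomial.C ((n : ℂ) + 1) * Polynomial.X ^ n) * X i := by
  have key : ∀ l : Fin (n + 1), ∑ j : Fin (n + 1),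
      ζ ^ ((j : ℕ) * (i + 1)) * ζ ^ ((j : ℕ) * (n - l)) = if l = i then (n : ℂ) + 1 else 0 := by
    intro l
    have : ∀ j : Fin (n + 1), ζ ^ ((j : ℕ) * (i + 1)) * ζ ^ ((j : ℕ) * (n - l)) =
        (ζ ^ ((i : ℕ) + 1 + (n - l))) ^ (j : ℕ) := fun j => by
      rw [← pow_mul, ← pow_add]; congr 1; ring
    simp only [this]
    split_ifs with h
    · subst h
      have : (l : ℕ) + 1 + (n - l) = n + 1 := by omega
      rw [this, hζ.pow_eq_one]
      simp
    · rw [Fin.sum_univ_eq_sum_range fun j => (ζ ^ ((i : ℕ) + 1 + (n - l))) ^ j]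
      have hne : ζ ^ ((i : ℕ) + 1 + (n - l)) ≠ 1 := by
        rw [Ne, hζ.pow_eq_one_iff_dvd]
        rintro ⟨c, hc⟩
        have hl : (l : ℕ) ≠ i := fun h' => h (Fin.ext h')
        have h1 : c ≠ 0 := by rintro rfl; omega
        have h2 : c < 2 := by
          by_contra h2
          have := Nat.mul_le_mul_left (n + 1) (not_lt.mp h2)
          omega
        have h3 : c = 1 := by omega
        subst h3
        omega
      rw [geom_sum_eq hne, ← pow_mul, mul_comm, pow_mul, hζ.pow_eq_one]
      simp
  rw [show toEigen n ζ (X i) = _ from eval₂Hom_X' _ _ i, map_sum]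
  simp only [map_mul (fromEigen n ζ), fromEigen_C, fromEigen_X, Finset.mul_sum]
  rw [Finset.sum_comm]
  have : ∀ l : Fin (n + 1), (∑ j : Fin (n + 1),
      C (Polynomial.C (ζ ^ ((j : ℕ) * (i + 1))) * Polynomial.X ^ (i : ℕ)) *
      (C (Polynomial.C (ζ ^ ((j : ℕ) * (n - l))) * Polynomial.X ^ (n - (l : ℕ))) * X l)) =
      C (Polynomial.C (if l = i then (n : ℂ) + 1 else 0) * Polynomial.X ^ ((i : ℕ) + (n - l)))
        * (X l : MvPolynomial (Fin (n + 1)) (Polynomial ℂ)) := by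
    intro l
    rw [← key l, map_sum, Finset.sum_mul, map_sum, Finset.sum_mul]
    refine Finset.sum_congr rfl fun j _ => ?_
    rw [← mul_assoc, ← C_mul]
    congr 2
    rw [Polynomial.C_mul]
    ring
  simp only [this]
  rw [Finset.sum_eq_single i (fun l _ hl => by simp [hl]) (by simp)]
  have : (i : ℕ) + (n - i) = n := by omega
  rw [this, if_pos rfl]

lemma fromEigen_toEigen (n k : ℕ) {ζ : ℂ} (hζ : IsPrimitiveRoot ζ (n + 1))
    {p : MvPolynomial (Fin (n + 1)) (Polynomial ℂ)} (hp : p.IsHomogeneous k) :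
    fromEigen n ζ (toEigen n ζ p) =
      C ((Polynomial.C ((n : ℂ) + 1) * Polynomial.X ^ n) ^ k) * baseChange n p := by
  conv_lhs => rw [p.as_sum]
  conv_rhs => rw [p.as_sum]
  simp only [map_sum, Finset.mul_sum]
  refine Finset.sum_congr rfl fun s hs => ?_
  have hdeg : ∑ i, s i = k := by
    rw [← hp (mem_support_iff.mp hs), Finsupp.weight_apply, Finsupp.sum_fintype _ _ (by simp)]
    simp
  have hmon : monomial s (coeff s p) = C (coeff s p) * ∏ i, X i ^ s i := by
    rw [monomial_eq, Finsupp.prod_fintype _ _ (by simp)]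
  have hC : toEigen n ζ (C (coeff s p)) = C (Polynomial.expand ℂ (n + 1) (coeff s p)) :=
    eval₂Hom_C _ _ _
  have hC' : baseChange n (C (coeff s p)) = C (Polynomial.expand ℂ (n + 1) (coeff s p)) :=
    map_C _ _
  have hX' : ∀ i, baseChange n (X i) = X i := fun i => map_X _ _
  rw [hmon]
  simp only [map_mul (fromEigen n ζ), map_mul (toEigen n ζ), map_mul (baseChange n), map_prod,
    map_pow (fromEigen n ζ), map_pow (toEigen n ζ), map_pow (baseChange n), hC, hC', hX',
    fromEigen_C, fromEigen_toEigen_X n hζ, mul_pow, Finset.prod_mul_distrib]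
  rw [Finset.prod_pow_eq_pow_sum, hdeg]
  simp only [map_mul, map_pow]
  ring

/-! ### Descent from `ℂ[t]` to `ℂ[z]` -/

/-- Apply to each coefficient the `ℂ[z]`-linear map `ℂ[t] → ℂ[z]` that multiplies by `t^r` and keeps
the exponents divisible by `n+1`. For varying `r` this extracts the components of an element of
`ℂ[t][x]` with respect to the basis `1, t, …, t^n` of `ℂ[t]` over `ℂ[z]` (up to powers of `z`). -/
noncomputable def descend (n r : ℕ) :
    MvPolynomial (Fin (n + 1)) (Polynomial ℂ) → MvPolynomial (Fin (n + 1)) (Polynomial ℂ) :=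
  fun p => ∑ s ∈ p.support,
    monomial s (Polynomial.contract (n + 1) (Polynomial.X ^ r * coeff s p))

lemma contract_succ_zero (n : ℕ) : Polynomial.contract (n + 1) (0 : Polynomial ℂ) = 0 := by
  ext; simp [Polynomial.coeff_contract]

lemma coeff_descend (n r : ℕ) (p : MvPolynomial (Fin (n + 1)) (Polynomial ℂ))
    (s : Fin (n + 1) →₀ ℕ) : coeff s (descend n r p) =
      Polynomial.contract (n + 1) (Polynomial.X ^ r * coeff s p) := by
  rw [descend, coeff_sum]
  simp only [coeff_monomial]
  rw [Finset.sum_ite_eq']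
  split_ifs with h
  · rfl
  · rw [notMem_support_iff.mp h, mul_zero, contract_succ_zero]

lemma descend_add (n r : ℕ) (p q : MvPolynomial (Fin (n + 1)) (Polynomial ℂ)) :
    descend n r (p + q) = descend n r p + descend n r q := by
  ext1 s
  simp only [coeff_descend, coeff_add, mul_add, Polynomial.contract_add n.succ_ne_zero]

lemma descend_C_mul_baseChange (n r : ℕ) (a : Polynomial ℂ)
    (p : MvPolynomial (Fin (n + 1)) (Polynomial ℂ)) : descend n r (C a * baseChange n p) =
      C (Polynomial.contract (n + 1) (Polynomial.X ^ r * a)) * p := by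
  ext1 s
  rw [coeff_descend, coeff_C_mul, coeff_C_mul, baseChange, coeff_map, ← mul_assoc]
  exact Polynomial.contract_mul_expand n.succ_ne_zero _ _

/-- `descend` is `ℂ[z]`-linear on coefficients and `D` has coefficients in `ℂ[z]`, so they commute.
-/
lemma descend_baseChangeD (n r : ℕ) (p : MvPolynomial (Fin (n + 1)) (Polynomial ℂ)) :
    descend n r (baseChangeD n p) = kloostermanD n (descend n r p) := by
  induction p using MvPolynomial.induction_on' with
  | monomial s a =>
    have h : monomial s a = C a * baseChange n (monomial s 1) := by
      rw [baseChange, map_monomial, map_one, C_mul_monomial, mul_one]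
    rw [h, Derivation.leibniz, derivation_C, smul_zero, add_zero, smul_eq_mul,
      ← baseChange_kloostermanD, descend_C_mul_baseChange, descend_C_mul_baseChange,
      Derivation.leibniz, derivation_C, smul_zero, add_zero, smul_eq_mul]
  | add p q hp hq => rw [map_add, descend_add, descend_add, map_add, hp, hq]

lemma exists_descend_ne_zero (n : ℕ) {p : MvPolynomial (Fin (n + 1)) (Polynomial ℂ)}
    (hp : p ≠ 0) : ∃ r, descend n r p ≠ 0 := by
  obtain ⟨s, hs⟩ := ne_zero_iff.mp hp
  obtain ⟨m, hm⟩ : ∃ m, (coeff s p).coeff m ≠ 0 := by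
    by_contra! h
    exact hs (Polynomial.ext h)
  -- `r = n * m` makes the exponent `m + r = m * (n + 1)` a multiple of `n + 1`.
  refine ⟨n * m, fun h => hm ?_⟩
  have h1 := congrArg (fun q => (coeff s q).coeff m) h
  simp only [coeff_descend, Polynomial.coeff_contract n.succ_ne_zero, coeff_zero,
    Polynomial.coeff_zero] at h1
  rwa [show m * (n + 1) = m + n * m by ring, Polynomial.coeff_X_pow_mul] at h1

/-! ### The injectivity criterion -/

/-- In eigencoordinates `D` multiplies `Y^I` by `t · ∑ I_i ζ^i`, so it kills no form of degree `k`
when none of these scalars vanishes. -/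
lemma eq_zero_of_no_relation (n k : ℕ) {ζ : ℂ} (hζ : IsPrimitiveRoot ζ (n + 1))
    (h : ¬∃ I : Fin (n + 1) → ℕ,
        (∑ i, I i) = k ∧ (∑ i : Fin (n + 1), (I i : ℂ) * ζ ^ (i : ℕ)) = 0)
    {p : MvPolynomial (Fin (n + 1)) (Polynomial ℂ)} (hp : p.IsHomogeneous k)
    (hD : kloostermanD n p = 0) : p = 0 := by
  have hE := toEigen_kloostermanD n hζ.pow_eq_one p
  rw [hD, map_zero] at hE
  have hhom : (toEigen n ζ p).IsHomogeneous k := by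
    have := hp.eval₂ (n := 1) (C.comp (Polynomial.expand ℂ (n + 1) : Polynomial ℂ →+* Polynomial ℂ))
      (fun i : Fin (n + 1) => ∑ j : Fin (n + 1),
        C (Polynomial.C (ζ ^ ((j : ℕ) * (i + 1))) * Polynomial.X ^ (i : ℕ)) * X j)
      (fun a => isHomogeneous_C _ _)
      (fun i => IsHomogeneous.sum _ _ _ fun j _ => (isHomogeneous_X _ j).C_mul _)
    rwa [one_mul] at this
  have h0 : toEigen n ζ p = 0 := by
    ext1 s
    by_contra hs
    have h1 := coeff_eigenDerivation n ζ s (toEigen n ζ p)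
    rw [← hE, coeff_zero] at h1
    have hdeg : ∑ i, s i = k := by
      rw [← hhom hs, Finsupp.weight_apply, Finsupp.sum_fintype _ _ (by simp)]
      simp
    rcases mul_eq_zero.mp h1.symm with h2 | h2
    · rcases mul_eq_zero.mp h2 with h3 | h3
      · exact h ⟨s, hdeg, Polynomial.C_eq_zero.mp h3⟩
      · exact Polynomial.X_ne_zero h3
    · exact hs h2
  have h1 := fromEigen_toEigen n k hζ hp
  rw [h0, map_zero] at h1
  have hn : (n : ℂ) + 1 ≠ 0 := Nat.cast_add_one_ne_zero n
  rcases mul_eq_zero.mp h1.symm with h2 | h2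
  · rw [C_eq_zero] at h2
    exact absurd h2 (pow_ne_zero _ (mul_ne_zero (Polynomial.C_ne_zero.mpr hn)
      (pow_ne_zero _ Polynomial.X_ne_zero)))
  · exact map_injective _ (Polynomial.expand_injective n.succ_pos) (h2.trans (map_zero _).symm)

/-- A relation `∑ I_i ζ^i = 0` makes the product `∏ y_j^(I_j)` of eigenvectors a nonzero kernel
element over `ℂ[t]`, some component of which is a nonzero kernel element over `ℂ[z]`. -/
lemma exists_kernel_of_relation (n k : ℕ) {ζ : ℂ} (hζ : IsPrimitiveRoot ζ (n + 1))
    (I : Fin (n + 1) → ℕ) (hI : ∑ i, I i = k)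
    (hI0 : ∑ i : Fin (n + 1), (I i : ℂ) * ζ ^ (i : ℕ) = 0) :
    ∃ p : MvPolynomial (Fin (n + 1)) (Polynomial ℂ),
      p.IsHomogeneous k ∧ kloostermanD n p = 0 ∧ p ≠ 0 := by
  set g := fromEigen n ζ (∏ j, X j ^ I j) with hg
  have hgprod : g = ∏ j, fromEigen n ζ (X j) ^ I j := by
    simp only [hg, map_prod, map_pow]
  have hgD : baseChangeD n g = 0 := by
    have hmon : (∏ j, X j ^ I j : MvPolynomial (Fin (n + 1)) (Polynomial ℂ)) =
        monomial (Finsupp.equivFunOnFinite.symm I) 1 := by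
      rw [monomial_eq, Finsupp.prod_fintype _ _ (by simp)]
      simp
    rw [hg, ← fromEigen_eigenDerivation n hζ.pow_eq_one, hmon, eigenDerivation_monomial]
    simp [hI0]
  have hghom : g.IsHomogeneous k := by
    rw [hgprod, ← hI]
    refine IsHomogeneous.prod _ _ _ fun j _ => ?_
    have h1 : (fromEigen n ζ (X j)).IsHomogeneous 1 := by
      rw [fromEigen_X]
      exact IsHomogeneous.sum _ _ _ fun i _ => (isHomogeneous_X _ i).C_mul _
    simpa using h1.pow (I j)
  have hg0 : g ≠ 0 := by
    rw [hgprod]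
    refine Finset.prod_ne_zero_iff.mpr fun j _ => pow_ne_zero _ fun h0 => ?_
    -- The coefficient of `x_n` in each eigenvector is `1`.
    have h1 := congrArg (coeff (Finsupp.single (Fin.last n) 1)) h0
    rw [fromEigen_X, coeff_sum, Finset.sum_eq_single (Fin.last n)] at h1
    · simp at h1
    · intro i _ hi
      rw [coeff_C_mul, coeff_X, if_neg, mul_zero]
      simpa [Finsupp.single_left_inj] using hi
    · simp
  obtain ⟨r, hr⟩ := exists_descend_ne_zero n hg0
  refine ⟨descend n r g, fun s hs => hghom fun h => hs ?_, ?_, hr⟩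
  · rw [coeff_descend, h, mul_zero, contract_succ_zero]
  · rw [← descend_baseChangeD, hgD]
    ext1 s
    rw [coeff_descend, coeff_zero, mul_zero, contract_succ_zero]

/-- For `n+1` prime, a relation `∑ I_i ζ^i = 0` makes `∑ I_i X^i` a multiple of the cyclotomic
polynomial in `ℤ[X]`; evaluate at `1`. Conversely, take all `I_i` equal. -/
lemma exists_relation_iff_dvd (n k : ℕ) (hp : Nat.Prime (n + 1)) {ζ : ℂ}
    (hζ : IsPrimitiveRoot ζ (n + 1)) :
    (∃ I : Fin (n + 1) → ℕ,
      (∑ i, I i) = k ∧ (∑ i : Fin (n + 1), (I i : ℂ) * ζ ^ (i : ℕ)) = 0) ↔ (n + 1) ∣ k := by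
  constructor
  · rintro ⟨I, hI, hI0⟩
    set q : Polynomial ℤ := ∑ i : Fin (n + 1), Polynomial.C (I i : ℤ) * Polynomial.X ^ (i : ℕ)
      with hq
    have hroot : Polynomial.aeval ζ q = 0 := by
      rw [hq, map_sum, ← hI0]
      simp
    have hdvd : Polynomial.cyclotomic (n + 1) ℤ ∣ q := by
      rw [Polynomial.cyclotomic_eq_minpoly hζ n.succ_pos]
      exact minpoly.isIntegrallyClosed_dvd (hζ.isIntegral n.succ_pos) hroot
    have : Fact (Nat.Prime (n + 1)) := ⟨hp⟩
    have h1 := Polynomial.eval_dvd (x := 1) hdvd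
    rw [Polynomial.eval_one_cyclotomic_prime, hq, Polynomial.eval_finsetSum] at h1
    simp only [Polynomial.eval_mul, Polynomial.eval_C, Polynomial.eval_pow, Polynomial.eval_X,
      one_pow, mul_one] at h1
    rw [← hI]
    exact_mod_cast h1
  · rintro ⟨m, rfl⟩
    refine ⟨fun _ => m, by simp, ?_⟩
    rw [← Finset.mul_sum, Fin.sum_univ_eq_sum_range fun i => ζ ^ i,
      hζ.geom_sum_eq_zero hp.one_lt, mul_zero]

/-- Let `n ≥ 1`, `k ≥ 1`, and `ζ` a primitive `(n+1)`-th root of unity.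
The map `D : P_k → P_k` is injective iff there is no tuple `I ∈ ℕ^{n+1}` with `|I| = k`
and `Σ_i I_i ζ^i = 0`.  In particular, if `n+1` is prime, `D` is injective on `P_k` iff
`(n+1) ∤ k`. -/
theorem kloosterman_D_injective_iff (n k : ℕ) (hn : 1 ≤ n) (hk : 1 ≤ k) (ζ : ℂ)
    (hζ : IsPrimitiveRoot ζ (n + 1)) :
    (Set.InjOn (kloostermanD n)
        (MvPolynomial.homogeneousSubmodule (Fin (n + 1)) (Polynomial ℂ) k) ↔
      ¬∃ I : Fin (n + 1) → ℕ,
        (∑ i, I i) = k ∧ (∑ i : Fin (n + 1), (I i : ℂ) * ζ ^ (i : ℕ)) = 0) ∧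
    (Nat.Prime (n + 1) →
      (Set.InjOn (kloostermanD n)
          (MvPolynomial.homogeneousSubmodule (Fin (n + 1)) (Polynomial ℂ) k) ↔
        ¬(n + 1) ∣ k)) := by
  have main : Set.InjOn (kloostermanD n)
        (MvPolynomial.homogeneousSubmodule (Fin (n + 1)) (Polynomial ℂ) k) ↔
      ¬∃ I : Fin (n + 1) → ℕ,
        (∑ i, I i) = k ∧ (∑ i : Fin (n + 1), (I i : ℂ) * ζ ^ (i : ℕ)) = 0 := by
    constructor
    · rintro hinj ⟨I, hI, hI0⟩
      obtain ⟨p, hp, hD, hp0⟩ := exists_kernel_of_relation n k hζ I hI hI0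
      exact hp0 (hinj hp (Submodule.zero_mem _) (hD.trans (map_zero _).symm))
    · intro h p hp q hq hpq
      refine sub_eq_zero.mp (eq_zero_of_no_relation n k hζ h (Submodule.sub_mem _ hp hq) ?_)
      rw [map_sub, hpq, sub_self]
  exact ⟨main, fun hprime => main.trans (not_congr (exists_relation_iff_dvd n k hprime hζ))⟩
end

section
/- Let k ≥ 1 be an integer and take n = 2, so R = ℂ[z][x₀, x₁, x₂] with derivation D(x₀) = x₁, D(x₁) = x₂, D(x₂) = z·x₀. Set η = z²x₀³ + z·x₁³ + x₂³ − 3z·x₀x₁x₂ (so that D(η) = 0). If 3 divides k, then the kernel of D : P_k → P_k is the free rank-one ℂ[z]-module ℂ[z]·η^{k/3}; if 3 does not divide k, then D : P_k → P_k is injective. -/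
/-!
The derivation `D` is linear on the span of `x₀, x₁, x₂`, with characteristic polynomial `t³ - z`, so
it is diagonalized by adjoining a cube root `w` of `z`. With `ζ` a primitive cube root of unity, the
substitution
`x₀ = u₀ + ζu₁ + ζ²u₂`, `x₁ = w(u₀ + ζ²u₁ + ζu₂)`, `x₂ = w²(u₀ + u₁ + u₂)`, `z = w³`
(`toDiag`) turns `D` into the diagonal derivation with `uⱼ ↦ wζʲuⱼ` (`diagD`, `toDiag_D`), whose
eigenvalue on `u₀ᵃu₁ᵇu₂ᶜ` is `w(a + bζ + cζ²)`. This vanishes only when `a = b = c`, so a homogeneous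
element of the kernel of degree `k` is sent to `0` if `3 ∤ k`, and to a multiple of `(u₀u₁u₂)^{k/3}`
otherwise (`eq_of_coeff_toDiag_ne_zero`). The substitution is invertible up to the factor `3w²`, hence
injective on homogeneous polynomials (`toDiag_injective`).

The scalar is found by evaluating at `x = (0, 0, 1)`, where `η` takes the value `1`: the point
`u = (1, 1, 1)` corresponds to `x = (0, 0, 3w²)`, so an element of the kernel that vanishes at
`(0, 0, 1)` is zero (`eq_zero_of_D_eq_zero`). For `p` in the kernel this applies to
`p - p(0, 0, 1) • η^{k/3}`.
-/

open MvPolynomial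

/-- The `ℂ[z]`-linear derivation `D` on `ℂ[z][x₀, x₁, x₂]` with `D(x₀) = x₁`, `D(x₁) = x₂`,
`D(x₂) = z·x₀`. -/
noncomputable def kloostermanD₃ :
    Derivation (Polynomial ℂ) (MvPolynomial (Fin 3) (Polynomial ℂ))
      (MvPolynomial (Fin 3) (Polynomial ℂ)) :=
  MvPolynomial.mkDerivation (Polynomial ℂ)
    ![MvPolynomial.X 1, MvPolynomial.X 2, MvPolynomial.C Polynomial.X * MvPolynomial.X 0]

/-- `η = z²x₀³ + z·x₁³ + x₂³ − 3z·x₀x₁x₂`. -/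
noncomputable def kloostermanEta : MvPolynomial (Fin 3) (Polynomial ℂ) :=
  MvPolynomial.C (Polynomial.X ^ 2) * MvPolynomial.X 0 ^ 3 +
    MvPolynomial.C Polynomial.X * MvPolynomial.X 1 ^ 3 + MvPolynomial.X 2 ^ 3 -
    3 * (MvPolynomial.C Polynomial.X * (MvPolynomial.X 0 * MvPolynomial.X 1 * MvPolynomial.X 2))

namespace KloostermanKernel

section Diagonalization

variable (ζ : ℂ)

/-- The linear forms in `u₀, u₁, u₂` substituted for `x₀, x₁, x₂`, scaled so that no denominators
in `w` occur. -/
noncomputable def diagForm : Fin 3 → MvPolynomial (Fin 3) (Polynomial ℂ) :=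
  ![X 0 + C (Polynomial.C ζ) * X 1 + C (Polynomial.C (ζ ^ 2)) * X 2,
    C Polynomial.X * (X 0 + C (Polynomial.C (ζ ^ 2)) * X 1 + C (Polynomial.C ζ) * X 2),
    C (Polynomial.X ^ 2) * (X 0 + X 1 + X 2)]

/-- The substitution diagonalizing `D`, from `ℂ[z][x₀, x₁, x₂]` to `ℂ[w][u₀, u₁, u₂]`. On coefficients
it is `z ↦ w³`. -/
noncomputable def toDiag :
    MvPolynomial (Fin 3) (Polynomial ℂ) →+* MvPolynomial (Fin 3) (Polynomial ℂ) :=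
  eval₂Hom (C.comp (Polynomial.expand ℂ 3 : Polynomial ℂ →+* Polynomial ℂ)) (diagForm ζ)

/-- The derivation of `ℂ[w][u₀, u₁, u₂]` with `uⱼ ↦ wζʲuⱼ`. -/
noncomputable def diagD :
    Derivation (Polynomial ℂ) (MvPolynomial (Fin 3) (Polynomial ℂ))
      (MvPolynomial (Fin 3) (Polynomial ℂ)) :=
  mkDerivation (Polynomial ℂ)
    fun j => C (Polynomial.X * Polynomial.C (ζ ^ (j : ℕ))) * X j

variable {ζ}

lemma toDiag_C (a : Polynomial ℂ) : toDiag ζ (C a) = C (Polynomial.expand ℂ 3 a) := by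
  simp [toDiag]

lemma toDiag_X (i : Fin 3) : toDiag ζ (X i) = diagForm ζ i := by
  simp [toDiag]

lemma toDiag_D (hζ : ζ ^ 2 + ζ + 1 = 0) (p : MvPolynomial (Fin 3) (Polynomial ℂ)) :
    toDiag ζ (kloostermanD₃ p) = diagD ζ (toDiag ζ p) := by
  have h3 : (C (Polynomial.C ζ) : MvPolynomial (Fin 3) (Polynomial ℂ)) ^ 3 = 1 := by
    rw [← map_pow, ← map_pow, show ζ ^ 3 = 1 by linear_combination (ζ - 1) * hζ]; simp
  induction p using MvPolynomial.induction_on with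
  | C a => rw [toDiag_C]; simp [kloostermanD₃, diagD, derivation_C]
  | add p q hp hq => simp [hp, hq]
  | mul_X p i hp =>
    have hX : toDiag ζ (kloostermanD₃ (X i)) = diagD ζ (toDiag ζ (X i)) := by
      fin_cases i <;>
        simp [kloostermanD₃, diagD, toDiag_X, toDiag_C, diagForm, mkDerivation_X,
          Derivation.leibniz, derivation_C, Derivation.leibniz_pow]
      · linear_combination (-C Polynomial.X * C (Polynomial.C ζ) * X 2) * h3
      · linear_combination (-C Polynomial.X ^ 2 * (X 1 + X 2)) * h3
      · ring
    simp only [Derivation.leibniz, map_mul, map_add, smul_eq_mul, hp, hX]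

lemma coeff_diagD (Q : MvPolynomial (Fin 3) (Polynomial ℂ)) (d : Fin 3 →₀ ℕ) :
    coeff d (diagD ζ Q) =
      Polynomial.X * Polynomial.C (d 0 + d 1 * ζ + d 2 * ζ ^ 2) * coeff d Q := by
  have h : diagD ζ = ∑ j : Fin 3,
      (C (Polynomial.X * Polynomial.C (ζ ^ (j : ℕ))) * X j :
        MvPolynomial (Fin 3) (Polynomial ℂ)) • pderiv j := by
    refine derivation_ext fun i => ?_
    fin_cases i <;> simp [diagD, mkDerivation_X, Fin.sum_univ_three, pderiv_X]
  have hj (j : Fin 3) : coeff d (X j * pderiv j Q) = d j * coeff d Q := by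
    rw [coeff_X_mul']
    split_ifs with hd
    · have h1 : d - Finsupp.single j 1 + Finsupp.single j 1 = d :=
        Finsupp.sub_add_single_one_cancel (Finsupp.mem_support_iff.mp hd)
      have h2 : ((d - Finsupp.single j 1 : Fin 3 →₀ ℕ) j : Polynomial ℂ) + 1 = d j := by
        have := DFunLike.congr_fun h1 j
        simp only [Finsupp.add_apply, Finsupp.single_eq_same] at this
        exact_mod_cast this
      rw [coeff_pderiv, h1, h2, mul_comm]
    · simp [Finsupp.notMem_support_iff.mp hd]
  rw [h]
  simp only [Fin.sum_univ_three, Derivation.add_apply, Derivation.smul_apply, smul_eq_mul,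
    mul_assoc, coeff_add, coeff_C_mul, hj]
  simp
  ring

/-- Evaluating a polynomial after the substitution amounts to evaluating it at the substituted point. -/
lemma eval_toDiag (u : Fin 3 → Polynomial ℂ) (q : MvPolynomial (Fin 3) (Polynomial ℂ)) :
    eval u (toDiag ζ q) =
      eval ![u 0 + Polynomial.C ζ * u 1 + Polynomial.C (ζ ^ 2) * u 2,
        Polynomial.X * (u 0 + Polynomial.C (ζ ^ 2) * u 1 + Polynomial.C ζ * u 2),
        Polynomial.X ^ 2 * (u 0 + u 1 + u 2)]
        (map (Polynomial.expand ℂ 3 : Polynomial ℂ →+* Polynomial ℂ) q) := by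
  induction q using MvPolynomial.induction_on with
  | C a => simp [toDiag]
  | add p q hp hq => simp [hp, hq]
  | mul_X p i hp =>
    rw [map_mul, map_mul, hp, map_mul, map_mul, toDiag_X, map_X, eval_X]
    refine congrArg _ ?_
    fin_cases i <;> simp [diagForm]

lemma isHomogeneous_toDiag {q : MvPolynomial (Fin 3) (Polynomial ℂ)} {k : ℕ}
    (hq : q.IsHomogeneous k) : (toDiag ζ q).IsHomogeneous k := by
  have hX (i : Fin 3) : (X i : MvPolynomial (Fin 3) (Polynomial ℂ)).IsHomogeneous 1 :=
    isHomogeneous_X _ i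
  have h0 : (diagForm ζ 0).IsHomogeneous 1 := by
    simp only [diagForm, Matrix.cons_val]
    exact ((hX 0).add ((hX 1).C_mul _)).add ((hX 2).C_mul _)
  have h1 : (diagForm ζ 1).IsHomogeneous 1 := by
    simp only [diagForm, Matrix.cons_val]
    exact (((hX 0).add ((hX 1).C_mul _)).add ((hX 2).C_mul _)).C_mul _
  have h2 : (diagForm ζ 2).IsHomogeneous 1 := by
    simp only [diagForm, Matrix.cons_val]
    exact (((hX 0).add (hX 1)).add (hX 2)).C_mul _
  have h := hq.eval₂ (C.comp (Polynomial.expand ℂ 3 : Polynomial ℂ →+* Polynomial ℂ))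
    (diagForm ζ) (fun r => isHomogeneous_C _ _) (fun i => match i with | 0 => h0 | 1 => h1 | 2 => h2)
  rwa [one_mul] at h

lemma eval_smul_of_isHomogeneous {S : Type*} [CommRing S] {q : MvPolynomial (Fin 3) S} {k : ℕ}
    (hq : q.IsHomogeneous k) (t : S) (x : Fin 3 → S) :
    eval (fun i => t * x i) q = t ^ k * eval x q := by
  rw [eval_eq', eval_eq', Finset.mul_sum]
  refine Finset.sum_congr rfl fun d hd => ?_
  have hdeg : k = d.degree := hq.degree_eq_sum_deg_support hd
  rw [hdeg, Finsupp.degree_eq_sum]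
  simp only [mul_pow, Finset.prod_mul_distrib, Finset.prod_pow_eq_pow_sum]
  ring

lemma toDiag_injective (hζ : ζ ^ 2 + ζ + 1 = 0) {q : MvPolynomial (Fin 3) (Polynomial ℂ)} {k : ℕ}
    (hq : q.IsHomogeneous k) (h : toDiag ζ q = 0) : q = 0 := by
  have hC : (Polynomial.C ζ) ^ 2 + Polynomial.C ζ + 1 = (0 : Polynomial ℂ) := by
    rw [← map_pow, ← map_add, ← Polynomial.C_1, ← map_add, hζ, map_zero]
  apply map_injective (Polynomial.expand ℂ 3 : Polynomial ℂ →+* Polynomial ℂ)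
    (Polynomial.expand_injective (by norm_num))
  rw [map_zero]
  refine MvPolynomial.funext fun x => ?_
  -- `u` is chosen so that the substitution produces the point `3w²x`.
  have key := eval_toDiag (ζ := ζ)
    (fun j => ![Polynomial.X ^ 2 * x 0 + Polynomial.X * x 1 + x 2,
      Polynomial.X ^ 2 * Polynomial.C ζ ^ 2 * x 0 + Polynomial.X * Polynomial.C ζ * x 1 + x 2,
      Polynomial.X ^ 2 * Polynomial.C ζ * x 0 + Polynomial.X * Polynomial.C ζ ^ 2 * x 1 + x 2] j) q
  rw [h, map_zero] at key
  have hpt : ![(Polynomial.X ^ 2 * x 0 + Polynomial.X * x 1 + x 2) + Polynomial.C ζ *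
        (Polynomial.X ^ 2 * Polynomial.C ζ ^ 2 * x 0 + Polynomial.X * Polynomial.C ζ * x 1 + x 2)
      + Polynomial.C (ζ ^ 2) *
        (Polynomial.X ^ 2 * Polynomial.C ζ * x 0 + Polynomial.X * Polynomial.C ζ ^ 2 * x 1 + x 2),
      Polynomial.X * ((Polynomial.X ^ 2 * x 0 + Polynomial.X * x 1 + x 2) + Polynomial.C (ζ ^ 2) *
        (Polynomial.X ^ 2 * Polynomial.C ζ ^ 2 * x 0 + Polynomial.X * Polynomial.C ζ * x 1 + x 2)
      + Polynomial.C ζ *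
        (Polynomial.X ^ 2 * Polynomial.C ζ * x 0 + Polynomial.X * Polynomial.C ζ ^ 2 * x 1 + x 2)),
      Polynomial.X ^ 2 * ((Polynomial.X ^ 2 * x 0 + Polynomial.X * x 1 + x 2) +
        (Polynomial.X ^ 2 * Polynomial.C ζ ^ 2 * x 0 + Polynomial.X * Polynomial.C ζ * x 1 + x 2) +
        (Polynomial.X ^ 2 * Polynomial.C ζ * x 0 + Polynomial.X * Polynomial.C ζ ^ 2 * x 1 + x 2))]
      = fun i => (3 * Polynomial.X ^ 2) * x i := by
    have h3 : (Polynomial.C ζ) ^ 3 = (1 : Polynomial ℂ) := by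
      linear_combination (Polynomial.C ζ - 1) * hC
    funext i
    fin_cases i <;> simp
    · linear_combination (2 * Polynomial.X ^ 2 * x 0 + Polynomial.X * x 1 * Polynomial.C ζ) * h3 +
        (Polynomial.X * x 1 + x 2) * hC
    · linear_combination (2 * Polynomial.X ^ 2 * x 1 + Polynomial.X ^ 3 * x 0 * Polynomial.C ζ) * h3
        + (Polynomial.X ^ 3 * x 0 + Polynomial.X * x 2) * hC
    · linear_combination (Polynomial.X ^ 4 * x 0 + Polynomial.X ^ 3 * x 1) * hC
  simp only [Matrix.cons_val_zero, Matrix.cons_val_one, Matrix.cons_val] at key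
  rw [hpt, eval_smul_of_isHomogeneous (hq.map _)] at key
  rw [map_zero]
  refine (mul_eq_zero.mp key.symm).resolve_left (pow_ne_zero _ ?_)
  simp

/-- Only monomials `u₀ᵃu₁ᵇu₂ᶜ` with `a = b = c` occur in the image of the kernel of `D`, since otherwise
the eigenvalue `w(a + bζ + cζ²)` of `diagD` is nonzero. -/
lemma eq_of_coeff_toDiag_ne_zero (hζ : ζ ^ 2 + ζ + 1 = 0) (him : ζ.im ≠ 0)
    {q : MvPolynomial (Fin 3) (Polynomial ℂ)} (hD : kloostermanD₃ q = 0) (d : Fin 3 →₀ ℕ)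
    (hd : coeff d (toDiag ζ q) ≠ 0) : d 0 = d 1 ∧ d 1 = d 2 := by
  have h := coeff_diagD (ζ := ζ) (toDiag ζ q) d
  rw [← toDiag_D hζ, hD, map_zero, coeff_zero] at h
  have h0 : (d 0 + d 1 * ζ + d 2 * ζ ^ 2 : ℂ) = 0 := by
    simpa [hd, -map_add] using h.symm
  have h1 : ((d 0 : ℂ) - d 2) + ((d 1 : ℂ) - d 2) * ζ = 0 := by
    linear_combination h0 - (d 2 : ℂ) * hζ
  have h2 := congrArg Complex.im h1
  simp [him] at h2
  have h3 : (d 1 : ℂ) - d 2 = 0 := by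
    rw [sub_eq_zero]; exact_mod_cast sub_eq_zero.mp h2
  rw [h3, zero_mul, add_zero, sub_eq_zero] at h1
  rw [sub_eq_zero] at h3
  have h4 : d 0 = d 2 := by exact_mod_cast h1
  have h5 : d 1 = d 2 := by exact_mod_cast h3
  exact ⟨h4.trans h5.symm, h5⟩

end Diagonalization

lemma exists_cubeRoot : ∃ ζ : ℂ, ζ ^ 2 + ζ + 1 = 0 ∧ ζ.im ≠ 0 := by
  have h3 : Real.sqrt 3 * Real.sqrt 3 = 3 := Real.mul_self_sqrt (by norm_num)
  refine ⟨⟨-1 / 2, Real.sqrt 3 / 2⟩, ?_, by simp⟩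
  apply Complex.ext
  · simp [pow_two]; nlinarith
  · simp [pow_two]; ring

lemma eq_zero_of_D_eq_zero {q : MvPolynomial (Fin 3) (Polynomial ℂ)} {k : ℕ}
    (hq : q.IsHomogeneous k) (hD : kloostermanD₃ q = 0)
    (he : 3 ∣ k → eval ![0, 0, 1] q = 0) : q = 0 := by
  obtain ⟨ζ, hζ, him⟩ := exists_cubeRoot
  refine toDiag_injective hζ hq ?_
  by_contra hne
  obtain ⟨d, hd⟩ := MvPolynomial.ne_zero_iff.mp hne
  have hdeg (e : Fin 3 →₀ ℕ) (h : coeff e (toDiag ζ q) ≠ 0) : ∀ i, 3 * e i = k := by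
    obtain ⟨h1, h2⟩ := eq_of_coeff_toDiag_ne_zero hζ him hD e h
    have h3 : k = e.degree := (isHomogeneous_toDiag (ζ := ζ) hq).degree_eq_sum_deg_support
      (mem_support_iff.mpr h)
    rw [Finsupp.degree_eq_sum, Fin.sum_univ_three] at h3
    intro i
    fin_cases i <;> simp <;> omega
  have huniq (e : Fin 3 →₀ ℕ) (h : coeff e (toDiag ζ q) ≠ 0) : e = d := by
    ext i
    have h1 := hdeg e h i
    have h2 := hdeg d hd i
    omega
  have hmono : toDiag ζ q = monomial d (coeff d (toDiag ζ q)) := by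
    ext1 e
    rw [coeff_monomial]
    split_ifs with h
    · rw [h]
    · by_contra h'
      exact h (huniq e h').symm
  -- At `u = (1, 1, 1)` the monomial takes the value of its coefficient, while `x = (0, 0, 3w²)`.
  have hev := eval_toDiag (ζ := ζ) (fun _ => 1) q
  have hC : 1 + Polynomial.C ζ + Polynomial.C (ζ ^ 2) = (0 : Polynomial ℂ) := by
    rw [← Polynomial.C_1, ← map_add, ← map_add, ← map_zero Polynomial.C]
    congr 1
    linear_combination hζ
  have hpt : ![1 + Polynomial.C ζ * 1 + Polynomial.C (ζ ^ 2) * 1,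
      Polynomial.X * (1 + Polynomial.C (ζ ^ 2) * 1 + Polynomial.C ζ * 1),
      Polynomial.X ^ 2 * (1 + 1 + 1)] =
      fun i => (3 * Polynomial.X ^ 2 : Polynomial ℂ) *
        ((Polynomial.expand ℂ 3 : Polynomial ℂ →+* Polynomial ℂ) ∘ ![0, 0, 1]) i := by
    funext i
    fin_cases i
    · simpa using hC
    · simp only [Fin.mk_one, Matrix.cons_val_one, Matrix.cons_val_zero, Function.comp, map_zero]
      linear_combination Polynomial.X * hC
    · simp; ring
  rw [hpt, eval_smul_of_isHomogeneous (hq.map _), ← map_eval,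
    he ⟨d 0, (hdeg d hd 0).symm⟩, map_zero, mul_zero, hmono, eval_monomial] at hev
  simp at hev
  exact hd hev

lemma D_eta : kloostermanD₃ kloostermanEta = 0 := by
  have h3 : (3 : MvPolynomial (Fin 3) (Polynomial ℂ)) = C 3 := (map_ofNat C 3).symm
  simp only [kloostermanEta, h3]
  simp [kloostermanD₃, mkDerivation_X, derivation_C, Derivation.leibniz,
    Derivation.leibniz_pow]
  rw [← h3]
  ring

lemma eval_eta : eval ![0, 0, 1] kloostermanEta = 1 := by
  simp [kloostermanEta]

lemma isHomogeneous_eta : kloostermanEta.IsHomogeneous 3 := by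
  have hX (i : Fin 3) : (X i : MvPolynomial (Fin 3) (Polynomial ℂ)).IsHomogeneous 1 :=
    isHomogeneous_X _ i
  have h3 (i : Fin 3) : (X i ^ 3 : MvPolynomial (Fin 3) (Polynomial ℂ)).IsHomogeneous 3 :=
    isHomogeneous_X_pow i 3
  unfold kloostermanEta
  refine ((((h3 0).C_mul _).add ((h3 1).C_mul _)).add (h3 2)).sub ?_
  rw [show (3 : MvPolynomial (Fin 3) (Polynomial ℂ)) = C 3 from (map_ofNat C 3).symm]
  exact ((((hX 0).mul (hX 1)).mul (hX 2)).C_mul _).C_mul _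

end KloostermanKernel

open KloostermanKernel in
/-- For `n = 2`: if `3 ∣ k` the kernel of `D : P_k → P_k` is the free
rank-one `ℂ[z]`-module `ℂ[z]·η^{k/3}`; if `3 ∤ k` then `D : P_k → P_k` is injective. -/
theorem kloosterman_kernel_D_n_two (k : ℕ) (hk : 1 ≤ k) :
    (3 ∣ k →
      kloostermanEta ^ (k / 3) ∈
          MvPolynomial.homogeneousSubmodule (Fin 3) (Polynomial ℂ) k ∧
        kloostermanD₃ (kloostermanEta ^ (k / 3)) = 0 ∧
        (∀ c : Polynomial ℂ, c • kloostermanEta ^ (k / 3) = 0 → c = 0) ∧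
        (∀ p ∈ MvPolynomial.homogeneousSubmodule (Fin 3) (Polynomial ℂ) k,
          kloostermanD₃ p = 0 ↔ ∃ c : Polynomial ℂ, p = c • kloostermanEta ^ (k / 3))) ∧
    (¬3 ∣ k →
      Set.InjOn (kloostermanD₃)
        (MvPolynomial.homogeneousSubmodule (Fin 3) (Polynomial ℂ) k)) := by
  refine ⟨fun h3 => ?_, fun h3 p hp q hq hpq => ?_⟩
  · have hmem : kloostermanEta ^ (k / 3) ∈ homogeneousSubmodule (Fin 3) (Polynomial ℂ) k := by
      have h := isHomogeneous_eta.pow (k / 3)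
      rwa [Nat.mul_div_cancel' h3] at h
    have hD : kloostermanD₃ (kloostermanEta ^ (k / 3)) = 0 := by
      rw [Derivation.leibniz_pow, D_eta]; simp
    refine ⟨hmem, hD, fun c hc => ?_, fun p hp => ⟨fun hpD => ?_, ?_⟩⟩
    · simpa [smul_eval, eval_eta] using congrArg (eval ![0, 0, 1]) hc
    · refine ⟨eval ![0, 0, 1] p, sub_eq_zero.mp ?_⟩
      refine eq_zero_of_D_eq_zero (k := k) (Submodule.sub_mem _ hp (Submodule.smul_mem _ _ hmem))
        ?_ fun _ => ?_
      · rw [map_sub, Derivation.map_smul, hD, hpD]; simp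
      · simp [smul_eval, eval_eta]
    · rintro ⟨c, rfl⟩
      rw [Derivation.map_smul, hD, smul_zero]
  · exact sub_eq_zero.mp (eq_zero_of_D_eq_zero (Submodule.sub_mem _ hp hq)
      (by rw [map_sub, hpq, sub_self]) fun h => absurd h h3)
end

section
/- Let V be a finite-dimensional ℂ-vector space, N : V → V a nilpotent linear map, and E : V → V any linear map. Define the ℂ-linear map θ on formal power series with coefficients in V by θ(Σ_{p≥0} v_p z^p) = Σ_{p≥0} (p·v_p + N(v_p) + E(v_{p−1})) z^p, where v_{−1} = 0 (i.e. θ(f) = z·f′ + N f + z·E f). Then: (i) every power series with zero constant term lies in the image of θ; and (ii) for c ∈ V, the constant power series with value c lies in the image of θ if and only if c lies in the image of N. Consequently, the inclusion of constants induces an isomorphism coker(N) ≅ coker(θ). -/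
/-!
For `p ≥ 1` the operator `p + N` is an invertible scalar plus a commuting nilpotent, hence invertible.
So the equation `θ(f) = g` can be solved coefficient by coefficient, with `N (f 0) = g 0` as the only
obstruction (`exists_solution_of_constant_term`). Both claims follow from this.
-/

theorem surjective_smul_add_nilpotent {V : Type*} [AddCommGroup V] [Module ℂ V]
    {N : V →ₗ[ℂ] V} (hN : IsNilpotent N) {a : ℂ} (ha : a ≠ 0) (w : V) :
    ∃ v : V, a • v + N v = w := by
  have hu : IsUnit (algebraMap ℂ (Module.End ℂ V) a) := (IsUnit.mk0 a ha).map _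
  have h : IsUnit (algebraMap ℂ (Module.End ℂ V) a + N) :=
    hN.isUnit_add_left_of_commute hu (Algebra.commutes a N).symm
  obtain ⟨v, hv⟩ := ((Module.End.isUnit_iff _).1 h).2 w
  exact ⟨v, by simpa [Module.algebraMap_end_apply] using hv⟩

/-- A solution of the constant-term equation extends recursively to a solution of `θ(f) = g`. -/
theorem exists_solution_of_constant_term {V : Type*} [AddCommGroup V] [Module ℂ V]
    {N : V →ₗ[ℂ] V} (E : V →ₗ[ℂ] V) (hN : IsNilpotent N) (g : ℕ → V) (v : V) (hv : N v = g 0) :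
    ∃ f : ℕ → V, ∀ p : ℕ,
      (p : ℂ) • f p + N (f p) + (if p = 0 then 0 else E (f (p - 1))) = g p := by
  have step : ∀ (p : ℕ) (u : V), ∃ x : V,
      ((p + 1 : ℕ) : ℂ) • x + N x = g (p + 1) - E u := fun p u =>
    surjective_smul_add_nilpotent hN (Nat.cast_ne_zero.2 p.succ_ne_zero) _
  choose s hs using step
  refine ⟨fun p => Nat.rec v s p, fun p => ?_⟩
  cases p with
  | zero => simpa using hv
  | succ p =>
    rw [if_neg p.succ_ne_zero]
    exact eq_sub_iff_add_eq.1 (hs p _)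

/-- Let `V` be a finite-dimensional `ℂ`-vector space, `N : V → V` nilpotent
and `E : V → V` arbitrary linear maps.  Define `θ` on formal power series `Σ v_p z^p` by
`θ(f)_p = p•v_p + N(v_p) + E(v_{p-1})` (with `v_{-1} = 0`).  Then:
(i) every power series with zero constant term lies in the image of `θ`;
(ii) for `c ∈ V`, the constant power series `c` lies in the image of `θ` iff `c ∈ im N`. -/
theorem theta_powerseries_image (V : Type*) [AddCommGroup V] [Module ℂ V]
    [FiniteDimensional ℂ V] (N E : V →ₗ[ℂ] V) (hN : IsNilpotent N) :
    (∀ g : ℕ → V, g 0 = 0 →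
      ∃ f : ℕ → V, ∀ p : ℕ,
        (p : ℂ) • f p + N (f p) + (if p = 0 then 0 else E (f (p - 1))) = g p) ∧
    (∀ c : V,
      (∃ f : ℕ → V, ∀ p : ℕ,
        (p : ℂ) • f p + N (f p) + (if p = 0 then 0 else E (f (p - 1))) =
          (if p = 0 then c else 0)) ↔
      c ∈ LinearMap.range N) := by
  refine ⟨fun g hg => exists_solution_of_constant_term E hN g 0 (by simp [hg]), fun c => ⟨?_, ?_⟩⟩
  · rintro ⟨f, hf⟩
    exact ⟨f 0, by simpa using hf 0⟩
  · rintro ⟨v, hv⟩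
    exact exists_solution_of_constant_term E hN (fun p => if p = 0 then c else 0) v (by simpa using hv)
end

section
/- Let V be a finite-dimensional ℂ-vector space, N : V → V a nilpotent linear map, and E : V → V any linear map. Define the ℂ-linear map θ on finitely supported families f = (f_p)_{p∈ℤ} with values in V (i.e. on V[z, z⁻¹]) by θ(f)_p = p·f_p + N(f_p) + E(f_{p−1}); θ preserves the subspace V[z] of families supported on ℕ. Then: (i) every f ∈ V[z, z⁻¹] with θ(f) ∈ V[z] lies in V[z] — in particular ker(θ on V[z,z⁻¹]) = ker(θ on V[z]); and (ii) V[z, z⁻¹] = V[z] + θ(V[z, z⁻¹]). Consequently, the inclusion V[z] ⊆ V[z, z⁻¹] induces isomorphisms both on kernels and on cokernels of θ. -/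
/-!
For `p ≠ 0` the operator `p + N` is a unit plus a commuting nilpotent, hence bijective
(`bijective_smul_add`). Thus on negative degrees the equation `θ(f)_p = g_p` determines `f_p`
uniquely from `f_{p-1}` and `g_p`. As finitely supported families vanish in all sufficiently
negative degrees, upward induction from there gives both statements: with `g = 0` on negative
degrees the recursion forces `f = 0` there, and for general `g` the recursion constructs `f` up
to degree `-1`, after which it is truncated to zero.
-/

theorem bijective_smul_add {V : Type*} [AddCommGroup V] [Module ℂ V] (N : V →ₗ[ℂ] V)
    (hN : IsNilpotent N) (c : ℂ) (hc : c ≠ 0) :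
    Function.Bijective (fun v : V => c • v + N v) := by
  have hu : IsUnit (algebraMap ℂ (Module.End ℂ V) c) := (IsUnit.mk0 c hc).map _
  have h : IsUnit (algebraMap ℂ (Module.End ℂ V) c + N) :=
    IsNilpotent.isUnit_add_left_of_commute hN hu (Algebra.commutes c N).symm
  exact (Module.End.isUnit_iff _).1 h

theorem exists_bound_of_finite_support {V : Type*} [Zero V] (f : ℤ → V)
    (hf : (Function.support f).Finite) : ∃ M : ℤ, ∀ p < M, f p = 0 := by
  obtain ⟨b, hb⟩ := hf.bddBelow
  refine ⟨b, fun p hp => ?_⟩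
  by_contra h
  exact absurd (hb h) (not_le.2 hp)

/-- Let `V` be a finite-dimensional `ℂ`-vector space, `N : V → V` nilpotent
and `E : V → V` arbitrary linear maps.  Define `θ` on finitely supported families
`f : ℤ → V` (i.e. on `V[z,z⁻¹]`) by `θ(f)_p = p•f_p + N(f_p) + E(f_{p-1})`.  Then:
(i) every finitely supported `f` with `θ(f) ∈ V[z]` lies in `V[z]` (so the kernels of `θ`
on `V[z,z⁻¹]` and on `V[z]` agree);
(ii) `V[z,z⁻¹] = V[z] + θ(V[z,z⁻¹])`. -/
theorem theta_laurent_reduction (V : Type*) [AddCommGroup V] [Module ℂ V]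
    [FiniteDimensional ℂ V] (N E : V →ₗ[ℂ] V) (hN : IsNilpotent N) :
    (∀ f : ℤ → V, (Function.support f).Finite →
      (∀ p : ℤ, p < 0 → (p : ℂ) • f p + N (f p) + E (f (p - 1)) = 0) →
      ∀ p : ℤ, p < 0 → f p = 0) ∧
    (∀ g : ℤ → V, (Function.support g).Finite →
      ∃ f : ℤ → V, (Function.support f).Finite ∧
        ∀ p : ℤ, p < 0 → g p = (p : ℂ) • f p + N (f p) + E (f (p - 1))) := by
  have hbij (p : ℤ) (hp : p < 0) : Function.Bijective (fun v : V => (p : ℂ) • v + N v) :=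
    bijective_smul_add N hN p (by exact_mod_cast hp.ne)
  refine ⟨fun f hf h => ?_, fun g hg => ?_⟩
  · obtain ⟨M, hM⟩ := exists_bound_of_finite_support f hf
    have key (n : ℕ) : ∀ p : ℤ, p < M + n → p < 0 → f p = 0 := by
      induction n with
      | zero => intro p hp _; exact hM p (by simpa using hp)
      | succ n ih =>
        intro p hp hp0
        have h1 := h p hp0
        rw [ih (p - 1) (by push_cast at hp; omega) (by omega), map_zero, add_zero] at h1
        exact (hbij p hp0).1 (by simpa using h1)
    exact fun p hp => key (p - M + 1).toNat p (by omega) hp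
  · obtain ⟨M, hM⟩ := exists_bound_of_finite_support g hg
    -- `S p` is a section of `p + N` for negative `p`; its other values are irrelevant.
    have hS : ∀ p : ℤ, ∃ s : V → V, p < 0 → ∀ v, (p : ℂ) • s v + N (s v) = v := by
      intro p
      by_cases hp : p < 0
      · choose s hs using (hbij p hp).2
        exact ⟨s, fun _ => hs⟩
      · exact ⟨id, fun h => absurd h hp⟩
    choose S hS using hS
    -- `u n` is the coefficient of the solution in degree `M - 1 + n`.
    let u : ℕ → V := fun n => Nat.rec 0 (fun n v => S (M + n) (g (M + n) - E v)) n
    have hu0 : u 0 = 0 := rfl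
    have hu (n : ℕ) : u (n + 1) = S (M + n) (g (M + n) - E (u n)) := rfl
    refine ⟨fun p => if p < 0 then u (p - (M - 1)).toNat else 0, ?_, fun p hp => ?_⟩
    · refine (Set.finite_Ico M 0).subset fun p hp => ?_
      by_contra hmem
      apply hp
      by_cases hp0 : p < 0
      · have : (p - (M - 1)).toNat = 0 := by
          rw [Set.mem_Ico] at hmem
          omega
        simp only [if_pos hp0, this, hu0]
      · simp only [if_neg hp0]
    · have hp1 : p - 1 < 0 := by omega
      simp only [if_pos hp, if_pos hp1]
      by_cases hpM : p < M
      · have e1 : (p - (M - 1)).toNat = 0 := by omega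
        have e2 : (p - 1 - (M - 1)).toNat = 0 := by omega
        rw [e1, e2, hu0, hM p hpM]
        simp
      · obtain ⟨n, rfl⟩ : ∃ n : ℕ, p = M + n := ⟨(p - M).toNat, by omega⟩
        have e1 : (M + (n : ℤ) - (M - 1)).toNat = n + 1 := by omega
        have e2 : (M + (n : ℤ) - 1 - (M - 1)).toNat = n := by omega
        rw [e1, e2, hu, hS _ hp, sub_add_cancel]
end

section
/- Let k ≥ 1 be an integer divisible by 3, and take n = 2, so R = ℂ[z][x₀, x₁, x₂] with derivation D(x₀) = x₁, D(x₁) = x₂, D(x₂) = z·x₀. Define θ : P_k → P_k by θ(f) = z·∂f/∂z + D(f). Then θ is injective and its cokernel is a finite-dimensional ℂ-vector space of dimension k(k+3)/6. -/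
/-!
Give `z` weight `3` and `x_i` weight `i`. Then `D` raises the weight by one and `z∂_z` preserves
it, so `θ = z∂_z + D` is governed by `D` on top-weight components. Write `k = 3m`.

*The kernel of `D`.* A polynomial of fixed weight is determined by its specialisation at `z = 1`
(`eq_zero_of_Φ`), where `D` becomes the cyclic shift of `x₀, x₁, x₂`. In eigencoordinates
`y₀, y₁, y₂` it is diagonal, `y₀^a y₁^b y₂^c` having eigenvalue `a + bζ + cζ²` with `ζ` a primitive
cube root of unity. In degree `3m` the kernel is therefore the line through `(y₀y₁y₂)^m`; upstairs
the kernel is spanned by the `z^j N^m`, `N` being the norm form, of weight `6m + 3j`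
(`weight_of_D_eq_zero`). Reading off the coefficient of `(y₀y₁y₂)^m`, which vanishes on the image
of `D`, shows that `z∂_z` acts on the class of `z^j N^m` modulo the image of `D` as multiplication
by `j + m ≠ 0` (`eq_zero_of_E_mem`).

*Strictness.* Let `F w` be the finite-dimensional part of `P_k` of weight `< w`. Looking at top
weights, `θ` is injective, and if `3 ∤ w` then `θ f ∈ F (w + 1)` forces `f ∈ F w`
(`component_eq_zero`). Hence for such `w` the image of `F (w + 1)` in the cokernel has dimension
`dim F (w + 1) - dim F w`, the number of monomials of weight `w`. For `w ≥ 2k` with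
`w ≡ 1 (mod 3)` this number is `k(k+3)/6`, independently of `w` (`card_pairs`). The cokernel is
the increasing union of these images, so it has the same dimension (`finrank_coker`).
-/

open MvPolynomial

/-- We model `R = ℂ[z][x₀, x₁, x₂]` as `MvPolynomial (Fin 4) ℂ`, the variable of index `0`
playing the role of `z` and the variable of index `i+1` playing the role of `x_i`.  These
are the values on the variables of the derivation `D` with `D(z) = 0` (so `D` is
`ℂ[z]`-linear), `D(x₀) = x₁`, `D(x₁) = x₂`, `D(x₂) = z·x₀`. -/
noncomputable def kloostermanDvals₃ : Fin 4 → MvPolynomial (Fin 4) ℂ :=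
  ![0, MvPolynomial.X 2, MvPolynomial.X 3, MvPolynomial.X 0 * MvPolynomial.X 1]

/-- The operator `θ(f) = z·∂f/∂z + D(f)`. -/
noncomputable def kloostermanTheta₃ : MvPolynomial (Fin 4) ℂ →ₗ[ℂ] MvPolynomial (Fin 4) ℂ :=
  LinearMap.mulLeft ℂ (MvPolynomial.X 0) ∘ₗ (MvPolynomial.pderiv 0).toLinearMap +
    (MvPolynomial.mkDerivation ℂ kloostermanDvals₃).toLinearMap

/-- `P_k`: polynomials homogeneous of total degree `k` in `x₀, x₁, x₂` (the variable `z`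
carrying weight `0`). -/
noncomputable def kloostermanPk₃ (k : ℕ) : Submodule ℂ (MvPolynomial (Fin 4) ℂ) :=
  MvPolynomial.weightedHomogeneousSubmodule ℂ (fun j => if (j : ℕ) = 0 then 0 else 1) k

namespace Kloosterman

/-! ### Derivations and weights -/

theorem mkDerivation_eq_sum {σ : Type*} [Fintype σ] (f : σ → MvPolynomial σ ℂ)
    (p : MvPolynomial σ ℂ) :
    mkDerivation ℂ f p = ∑ i, f i * pderiv i p := by
  classical
  have hsum : ∀ q, (∑ i, f i • pderiv (R := ℂ) i) q = ∑ i, f i * pderiv i q := fun q => by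
    have h := congrFun (map_sum Derivation.coeFnAddMonoidHom (fun i => f i • pderiv (R := ℂ) i)
      Finset.univ) q
    rw [Finset.sum_apply] at h
    exact h
  have h : mkDerivation ℂ f = ∑ i, f i • pderiv (R := ℂ) i := by
    apply derivation_ext
    intro j
    rw [mkDerivation_X, hsum, Finset.sum_eq_single j]
    · simp
    · intro i _ hij
      simp [pderiv_X_of_ne hij.symm]
    · simp
  rw [h, hsum]

/-- An algebra homomorphism intertwines two derivations as soon as it does so on the variables. -/
theorem hom_derivation_comm {σ τ : Type*} (Φ : MvPolynomial σ ℂ →ₐ[ℂ] MvPolynomial τ ℂ)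
    (d : Derivation ℂ (MvPolynomial σ ℂ) (MvPolynomial σ ℂ))
    (e : Derivation ℂ (MvPolynomial τ ℂ) (MvPolynomial τ ℂ))
    (h : ∀ i, Φ (d (X i)) = e (Φ (X i))) (p : MvPolynomial σ ℂ) : Φ (d p) = e (Φ p) := by
  induction p using MvPolynomial.induction_on with
  | C a =>
    rw [derivation_C, map_zero, ← algebraMap_eq, AlgHom.commutes, Derivation.map_algebraMap]
  | add p q hp hq => simp only [map_add, hp, hq]
  | mul_X p i hp =>
    simp only [map_mul, Derivation.leibniz, smul_eq_mul, map_add, hp, h]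

theorem mul_pderiv_weighted {σ : Type*} {w : σ → ℕ} {n d : ℕ} {i : σ} {p f : MvPolynomial σ ℂ}
    (hp : IsWeightedHomogeneous w p (w i + d)) (hf : IsWeightedHomogeneous w f n) :
    IsWeightedHomogeneous w (p * pderiv i f) (n + d) := by
  by_cases hn : w i ≤ n
  · have h1 := hf.pderiv (i := i) (n' := n - w i) (by omega)
    have h2 := hp.mul h1
    have e : w i + d + (n - w i) = n + d := by omega
    rwa [e] at h2
  · have h0 : pderiv i f = 0 := by
      ext s
      rw [coeff_pderiv, hf.coeff_eq_zero, zero_mul, coeff_zero]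
      intro h
      rw [map_add, Finsupp.weight_single] at h
      simp at h
      omega
    rw [h0, mul_zero]
    exact isWeightedHomogeneous_zero _ _ _

theorem mkDerivation_weighted {σ : Type*} [Fintype σ] {w : σ → ℕ} {n d : ℕ}
    {v : σ → MvPolynomial σ ℂ} {f : MvPolynomial σ ℂ}
    (hv : ∀ i, IsWeightedHomogeneous w (v i) (w i + d)) (hf : IsWeightedHomogeneous w f n) :
    IsWeightedHomogeneous w (mkDerivation ℂ v f) (n + d) := by
  rw [mkDerivation_eq_sum]
  exact IsWeightedHomogeneous.sum _ _ _ fun i _ => mul_pderiv_weighted (hv i) hf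

/-- A linear map raising weights by `d` shifts weighted homogeneous components by `d`. -/
theorem component_shift {σ : Type*} {w : σ → ℕ} {d : ℕ}
    (L : MvPolynomial σ ℂ →ₗ[ℂ] MvPolynomial σ ℂ)
    (hL : ∀ f n, IsWeightedHomogeneous w f n → IsWeightedHomogeneous w (L f) (n + d))
    (f : MvPolynomial σ ℂ) (n : ℕ) :
    weightedHomogeneousComponent w (n + d) (L f) = L (weightedHomogeneousComponent w n f) := by
  induction f using MvPolynomial.induction_on' with
  | monomial s a =>
    have h1 : IsWeightedHomogeneous w (monomial s a) (Finsupp.weight w s) :=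
      isWeightedHomogeneous_monomial _ _ _ rfl
    have h2 := hL _ _ h1
    rw [weightedHomogeneousComponent_of_mem h1, weightedHomogeneousComponent_of_mem h2]
    by_cases h : n = Finsupp.weight w s
    · simp [h]
    · simp [h]
  | add p q hp hq => simp only [map_add, hp, hq]

theorem component_zero_of_shift {σ : Type*} {w : σ → ℕ} {d : ℕ}
    (L : MvPolynomial σ ℂ →ₗ[ℂ] MvPolynomial σ ℂ)
    (hL : ∀ f n, IsWeightedHomogeneous w f n → IsWeightedHomogeneous w (L f) (n + d))
    (f : MvPolynomial σ ℂ) {n : ℕ} (hn : n < d) :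
    weightedHomogeneousComponent w n (L f) = 0 := by
  induction f using MvPolynomial.induction_on' with
  | monomial s a =>
    have h1 : IsWeightedHomogeneous w (monomial s a) (Finsupp.weight w s) :=
      isWeightedHomogeneous_monomial _ _ _ rfl
    have h2 := hL _ _ h1
    rw [weightedHomogeneousComponent_of_mem h2, if_neg (by omega)]
  | add p q hp hq => simp only [map_add, hp, hq, add_zero]

/-! ### The operators `D` and `z∂_z` and the two gradings -/

/-- The degree in `x₀, x₁, x₂`. -/
abbrev xdeg : Fin 4 → ℕ := fun j => if (j : ℕ) = 0 then 0 else 1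

/-- The weight for which `z` has weight `3` and `x_i` has weight `i`; it is raised by exactly one
by `D` and preserved by `z∂_z`. -/
def wt : Fin 4 → ℕ := ![3, 0, 1, 2]

/-- The `ℂ[z]`-linear derivation `D`. -/
noncomputable def D : Derivation ℂ (MvPolynomial (Fin 4) ℂ) (MvPolynomial (Fin 4) ℂ) :=
  mkDerivation ℂ kloostermanDvals₃

/-- The Euler operator `z∂_z`. -/
noncomputable def E : Derivation ℂ (MvPolynomial (Fin 4) ℂ) (MvPolynomial (Fin 4) ℂ) :=
  mkDerivation ℂ ![X 0, 0, 0, 0]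

theorem E_apply (f : MvPolynomial (Fin 4) ℂ) : E f = X 0 * pderiv 0 f := by
  simp [E, mkDerivation_eq_sum, Fin.sum_univ_four]

theorem theta_apply (f : MvPolynomial (Fin 4) ℂ) : kloostermanTheta₃ f = E f + D f := by
  rw [E_apply]
  simp [kloostermanTheta₃, D]

theorem xdeg_D {f : MvPolynomial (Fin 4) ℂ} {n : ℕ} (hf : IsWeightedHomogeneous xdeg f n) :
    IsWeightedHomogeneous xdeg (D f) n := by
  refine mkDerivation_weighted (d := 0) (fun i => ?_) hf
  fin_cases i
  · exact isWeightedHomogeneous_zero _ _ _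
  · exact isWeightedHomogeneous_X ℂ xdeg 2
  · exact isWeightedHomogeneous_X ℂ xdeg 3
  · exact (isWeightedHomogeneous_X ℂ xdeg 0).mul (isWeightedHomogeneous_X ℂ xdeg 1)

theorem xdeg_E {f : MvPolynomial (Fin 4) ℂ} {n : ℕ} (hf : IsWeightedHomogeneous xdeg f n) :
    IsWeightedHomogeneous xdeg (E f) n := by
  refine mkDerivation_weighted (d := 0) (fun i => ?_) hf
  fin_cases i
  · exact isWeightedHomogeneous_X ℂ xdeg 0
  all_goals exact isWeightedHomogeneous_zero _ _ _

theorem wt_D {f : MvPolynomial (Fin 4) ℂ} {n : ℕ} (hf : IsWeightedHomogeneous wt f n) :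
    IsWeightedHomogeneous wt (D f) (n + 1) := by
  refine mkDerivation_weighted (d := 1) (fun i => ?_) hf
  fin_cases i
  · exact isWeightedHomogeneous_zero _ _ _
  · exact isWeightedHomogeneous_X ℂ wt 2
  · exact isWeightedHomogeneous_X ℂ wt 3
  · exact (isWeightedHomogeneous_X ℂ wt 0).mul (isWeightedHomogeneous_X ℂ wt 1)

theorem wt_E {f : MvPolynomial (Fin 4) ℂ} {n : ℕ} (hf : IsWeightedHomogeneous wt f n) :
    IsWeightedHomogeneous wt (E f) n := by
  refine mkDerivation_weighted (d := 0) (fun i => ?_) hf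
  fin_cases i
  · exact isWeightedHomogeneous_X ℂ wt 0
  all_goals exact isWeightedHomogeneous_zero _ _ _

theorem theta_mem {k : ℕ} {f : MvPolynomial (Fin 4) ℂ} (hf : f ∈ kloostermanPk₃ k) :
    kloostermanTheta₃ f ∈ kloostermanPk₃ k := by
  rw [theta_apply]
  exact (xdeg_E hf).add (xdeg_D hf)

theorem component_theta_succ (f : MvPolynomial (Fin 4) ℂ) (v : ℕ) :
    weightedHomogeneousComponent wt (v + 1) (kloostermanTheta₃ f) =
      E (weightedHomogeneousComponent wt (v + 1) f) + D (weightedHomogeneousComponent wt v f) := by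
  rw [theta_apply, map_add]
  congr 1
  · exact component_shift (d := 0) E.toLinearMap (fun _ _ => wt_E) f (v + 1)
  · exact component_shift (d := 1) D.toLinearMap (fun _ _ => wt_D) f v

theorem component_theta_zero (f : MvPolynomial (Fin 4) ℂ) :
    weightedHomogeneousComponent wt 0 (kloostermanTheta₃ f) =
      E (weightedHomogeneousComponent wt 0 f) := by
  have h : weightedHomogeneousComponent wt 0 (D f) = 0 :=
    component_zero_of_shift (d := 1) D.toLinearMap (fun _ _ => wt_D) f one_pos
  rw [theta_apply, map_add, h, add_zero]
  exact component_shift (d := 0) E.toLinearMap (fun _ _ => wt_E) f 0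

theorem weight_xdeg (s : Fin 4 →₀ ℕ) : Finsupp.weight xdeg s = s 1 + s 2 + s 3 := by
  rw [Finsupp.weight_apply, Finsupp.sum_fintype _ _ (by simp), Fin.sum_univ_four]
  simp

theorem weight_wt (s : Fin 4 →₀ ℕ) : Finsupp.weight wt s = 3 * s 0 + s 2 + 2 * s 3 := by
  rw [Finsupp.weight_apply, Finsupp.sum_fintype _ _ (by simp), Fin.sum_univ_four]
  simp [wt]
  ring

theorem component_mem {k : ℕ} {f : MvPolynomial (Fin 4) ℂ} (hf : f ∈ kloostermanPk₃ k) (v : ℕ) :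
    weightedHomogeneousComponent wt v f ∈ kloostermanPk₃ k := by
  classical
  intro s hs
  rw [coeff_weightedHomogeneousComponent] at hs
  exact hf (fun h => hs (by simp [h]))

/-! ### Diagonalising `D` at `z = 1` -/

theorem exists_zeta : ∃ ζ : ℂ, ζ ^ 2 = -1 - ζ ∧ ζ.im ≠ 0 := by
  refine ⟨⟨-1 / 2, √3 / 2⟩, ?_, by simp⟩
  have h : √3 * √3 = 3 := Real.mul_self_sqrt (by norm_num)
  apply Complex.ext
  · simp [pow_two]
    linarith
  · simp [pow_two]
    ring

/-- A vanishing combination `a + bζ + cζ²` with natural coefficients is balanced. -/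
theorem balanced {ζ : ℂ} (h1 : ζ ^ 2 = -1 - ζ) (h2 : ζ.im ≠ 0) {a b c : ℕ}
    (h : (a : ℂ) + ζ * b + ζ ^ 2 * c = 0) : a = b ∧ b = c := by
  rw [h1] at h
  have him := congrArg Complex.im h
  have hre := congrArg Complex.re h
  simp at him hre
  have hbc : (b : ℝ) = c := by
    have : ζ.im * ((b : ℝ) - c) = 0 := by linarith
    rcases mul_eq_zero.1 this with h | h
    · exact absurd h h2
    · linarith
  have hac : (a : ℝ) = b := by
    rw [← hbc] at hre
    linarith
  exact ⟨by exact_mod_cast hac, by exact_mod_cast hbc⟩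

/-- The specialisation `z = 1` followed by the linear change of variables from `x₀, x₁, x₂` to
eigenvectors `y₀, y₁, y₂` of the cyclic shift `x₀ → x₁ → x₂ → x₀`. -/
noncomputable def Φ (ζ : ℂ) : MvPolynomial (Fin 4) ℂ →ₐ[ℂ] MvPolynomial (Fin 3) ℂ :=
  aeval ![1, X 0 + C ζ * X 1 + C (ζ ^ 2) * X 2, X 0 + C (ζ ^ 2) * X 1 + C ζ * X 2,
    X 0 + X 1 + X 2]

/-- The derivation with eigenvector `y_i` for the eigenvalue `μ i`. -/
noncomputable def diag (μ : Fin 3 → ℂ) :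
    Derivation ℂ (MvPolynomial (Fin 3) ℂ) (MvPolynomial (Fin 3) ℂ) :=
  mkDerivation ℂ fun i => C (μ i) * X i

theorem coeff_X_mul_pderiv (s : Fin 3 →₀ ℕ) (i : Fin 3) (p : MvPolynomial (Fin 3) ℂ) :
    coeff s (X i * pderiv i p) = s i * coeff s p := by
  classical
  rw [coeff_X_mul']
  split_ifs with h
  · rw [coeff_pderiv]
    have hs : s - Finsupp.single i 1 + Finsupp.single i 1 = s := by
      apply Finsupp.sub_add_single_one_cancel
      simpa using h
    have hpos : 1 ≤ s i := Nat.one_le_iff_ne_zero.2 (by simpa using h)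
    rw [hs]
    simp [Nat.cast_sub hpos]
    ring
  · have : s i = 0 := by simpa using h
    simp [this]

theorem coeff_diag (μ : Fin 3 → ℂ) (s : Fin 3 →₀ ℕ) (p : MvPolynomial (Fin 3) ℂ) :
    coeff s (diag μ p) = (∑ i, μ i * s i) * coeff s p := by
  rw [diag, mkDerivation_eq_sum, coeff_sum, Finset.sum_mul]
  refine Finset.sum_congr rfl fun i _ => ?_
  rw [mul_assoc, coeff_C_mul, coeff_X_mul_pderiv, mul_assoc]

theorem Φ_D {ζ : ℂ} (h : ζ ^ 2 = -1 - ζ) (f : MvPolynomial (Fin 4) ℂ) :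
    Φ ζ (D f) = diag ![1, ζ, ζ ^ 2] (Φ ζ f) := by
  have h3 : ζ ^ 3 = 1 := by linear_combination (ζ - 1) * h
  have hC : (C ζ : MvPolynomial (Fin 3) ℂ) ^ 3 = 1 := by rw [← C_pow, h3, C_1]
  refine hom_derivation_comm _ D _ (fun i => ?_) f
  fin_cases i
  · simp [D, kloostermanDvals₃, Φ, diag]
  · simp [D, kloostermanDvals₃, Φ, diag, Derivation.leibniz]
    linear_combination (-X 2 * C ζ) * hC
  · simp [D, kloostermanDvals₃, Φ, diag, Derivation.leibniz]
    linear_combination (-X 1 - X 2) * hC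
  · simp [D, kloostermanDvals₃, Φ, diag]

/-- The derivation `x₁∂₁ + 2x₂∂₂` measuring the weight at `z = 1`, in `x`-coordinates. -/
noncomputable def S : Derivation ℂ (MvPolynomial (Fin 4) ℂ) (MvPolynomial (Fin 4) ℂ) :=
  mkDerivation ℂ ![0, 0, X 2, 2 * X 3]

/-- The derivation `x₁∂₁ + 2x₂∂₂` in `y`-coordinates; its matrix has all diagonal entries `1`. -/
noncomputable def W (ζ : ℂ) : Derivation ℂ (MvPolynomial (Fin 3) ℂ) (MvPolynomial (Fin 3) ℂ) :=
  mkDerivation ℂ ![X 0 + C ((2 + ζ ^ 2) / 3) * X 1 + C ((2 + ζ) / 3) * X 2,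
    X 1 + C ((2 + ζ) / 3) * X 0 + C ((2 + ζ ^ 2) / 3) * X 2,
    X 2 + C ((2 + ζ ^ 2) / 3) * X 0 + C ((2 + ζ) / 3) * X 1]

theorem Φ_S {ζ : ℂ} (h : ζ ^ 2 = -1 - ζ) (f : MvPolynomial (Fin 4) ℂ) :
    Φ ζ (S f) = W ζ (Φ ζ f) := by
  have h3 : ζ ^ 3 = 1 := by linear_combination (ζ - 1) * h
  have key : ∀ a b c a' b' c' : ℂ, a = a' → b = b' → c = c' →
      (C a * X 0 + C b * X 1 + C c * X 2 : MvPolynomial (Fin 3) ℂ) =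
      C a' * X 0 + C b' * X 1 + C c' * X 2 := by
    rintro a b c _ _ _ rfl rfl rfl
    rfl
  refine hom_derivation_comm _ S _ (fun i => ?_) f
  fin_cases i
  · simp [S, Φ, W]
  · have := key 0 0 0 (1 + ζ * ((2 + ζ) / 3) + ζ ^ 2 * ((2 + ζ ^ 2) / 3))
      ((2 + ζ ^ 2) / 3 + ζ + ζ ^ 2 * ((2 + ζ) / 3))
      ((2 + ζ) / 3 + ζ * ((2 + ζ ^ 2) / 3) + ζ ^ 2)
      (by linear_combination (-1 / 3 * (ζ ^ 2 - ζ + 3)) * h)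
      (by linear_combination (-1 / 3 * (ζ + 2)) * h)
      (by linear_combination (-1 / 3 * (ζ + 2)) * h)
    simp only [map_add, map_mul, map_zero, map_one, zero_mul, add_zero] at this
    simp [S, Φ, W, Derivation.leibniz]
    simp only [map_pow] at this
    linear_combination this
  · have := key 1 (ζ ^ 2) ζ (1 + ζ ^ 2 * ((2 + ζ) / 3) + ζ * ((2 + ζ ^ 2) / 3))
      ((2 + ζ ^ 2) / 3 + ζ ^ 2 + ζ * ((2 + ζ) / 3))
      ((2 + ζ) / 3 + ζ ^ 2 * ((2 + ζ ^ 2) / 3) + ζ)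
      (by linear_combination (-2 / 3 * (ζ + 0)) * h)
      (by linear_combination (-2 / 3) * h)
      (by linear_combination (-1 / 3 * (ζ ^ 2 - ζ + 2)) * h)
    simp only [map_add, map_mul, map_pow, map_one] at this
    simp [S, Φ, W, Derivation.leibniz]
    linear_combination this
  · have := key 2 2 2 (1 + (2 + ζ) / 3 + (2 + ζ ^ 2) / 3)
      ((2 + ζ ^ 2) / 3 + 1 + (2 + ζ) / 3)
      ((2 + ζ) / 3 + (2 + ζ ^ 2) / 3 + 1)
      (by linear_combination (-1 / 3) * h)
      (by linear_combination (-1 / 3) * h)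
      (by linear_combination (-1 / 3) * h)
    have hC2 : (C 2 : MvPolynomial (Fin 3) ℂ) = 2 := map_ofNat C 2
    simp only [map_add, map_one, hC2] at this
    have hS : S (X 3) = 2 * X 3 := by simp [S]
    change Φ ζ (S (X 3)) = W ζ (Φ ζ (X 3))
    rw [hS, map_mul, map_ofNat]
    simp [Φ, W]
    linear_combination this

/-- Only the diagonal entries of the matrix of `W` contribute to the coefficient at `s` of the
image of a monomial with exponent `s`. -/
theorem coeff_W_monomial (ζ : ℂ) (s : Fin 3 →₀ ℕ) (c : ℂ) :
    coeff s (W ζ (monomial s c)) = (s 0 + s 1 + s 2 : ℕ) * c := by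
  classical
  have hoff : ∀ i j : Fin 3, j ≠ i → coeff s (X j * pderiv i (monomial s c)) = 0 := by
    intro i j hij
    rw [coeff_X_mul']
    split_ifs with h
    · rw [coeff_pderiv, coeff_monomial, if_neg, zero_mul]
      intro e
      have := DFunLike.congr_fun e i
      simp [hij] at this
    · rfl
  have hdiag : ∀ i : Fin 3, coeff s (X i * pderiv i (monomial s c)) = s i * c := by
    intro i
    rw [coeff_X_mul_pderiv, coeff_monomial, if_pos rfl]
  rw [W, mkDerivation_eq_sum, Fin.sum_univ_three]
  simp only [Matrix.cons_val_zero, Matrix.cons_val_one, Matrix.cons_val, add_mul, mul_assoc,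
    coeff_add, coeff_C_mul, hdiag]
  rw [hoff 0 1 (by decide), hoff 0 2 (by decide), hoff 1 0 (by decide), hoff 1 2 (by decide),
    hoff 2 0 (by decide), hoff 2 1 (by decide)]
  push_cast
  ring

theorem eval_Φ {ζ : ℂ} (h : ζ ^ 2 = -1 - ζ) (a b c : ℂ) (f : MvPolynomial (Fin 4) ℂ) :
    eval ![1, a, b, c] f =
      eval ![(a + b + c) / 3, (c + ζ * b + ζ ^ 2 * a) / 3, (c + ζ ^ 2 * b + ζ * a) / 3]
        (Φ ζ f) := by
  have h3 : ζ ^ 3 = 1 := by linear_combination (ζ - 1) * h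
  have key : aeval (R := ℂ) ![1, a, b, c] = (aeval (R := ℂ)
      ![(a + b + c) / 3, (c + ζ * b + ζ ^ 2 * a) / 3, (c + ζ ^ 2 * b + ζ * a) / 3]).comp
        (Φ ζ) := by
    apply algHom_ext
    intro i
    fin_cases i
    · simp [Φ]
    · simp [Φ]
      linear_combination (-2 * a / 3) * h3 + (-b - c) / 3 * h - b / 3 * ζ * h3
    · simp [Φ]
      linear_combination (-2 * b / 3) * h3 + (-a - c) / 3 * h - a / 3 * ζ * h3
    · simp [Φ]
      linear_combination (-a - b) / 3 * h
  have := DFunLike.congr_fun key f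
  simpa [aeval_eq_eval] using this

theorem eval_scale {f : MvPolynomial (Fin 4) ℂ} {v : ℕ} (hf : IsWeightedHomogeneous wt f v)
    (t : ℂ) (p : Fin 4 → ℂ) :
    eval (fun i => t ^ wt i * p i) f = t ^ v * eval p f := by
  rw [eval_eq', eval_eq', Finset.mul_sum]
  refine Finset.sum_congr rfl fun d hd => ?_
  have hv := hf (mem_support_iff.1 hd)
  simp only [mul_pow, Finset.prod_mul_distrib, ← pow_mul, Finset.prod_pow_eq_pow_sum]
  rw [Finsupp.weight_apply, Finsupp.sum_fintype _ _ (by simp)] at hv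
  simp only [smul_eq_mul, mul_comm (d _)] at hv
  rw [hv]
  ring

/-- On weighted homogeneous polynomials no information is lost by setting `z = 1`. -/
theorem eq_zero_of_Φ {ζ : ℂ} (h : ζ ^ 2 = -1 - ζ) {f : MvPolynomial (Fin 4) ℂ} {v : ℕ}
    (hf : IsWeightedHomogeneous wt f v) (h0 : Φ ζ f = 0) : f = 0 := by
  have hX : X 0 * f = 0 := by
    apply MvPolynomial.funext
    intro p
    rw [map_mul, eval_X, map_zero]
    by_cases hp : p 0 = 0
    · rw [hp, zero_mul]
    obtain ⟨t, ht⟩ := IsAlgClosed.exists_pow_nat_eq (p 0) (n := 3) (by norm_num)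
    have ht0 : t ≠ 0 := by
      rintro rfl
      exact hp (by rw [← ht]; simp)
    have hpt : p = fun i => t ^ wt i * (![1, p 1, p 2 / t, p 3 / t ^ 2] : Fin 4 → ℂ) i := by
      funext i
      fin_cases i
      · simp [wt, ht]
      · simp [wt]
      · simp [wt]
        field_simp
      · simp [wt]
        field_simp
    rw [hpt, eval_scale hf, eval_Φ h, h0]
    simp
  exact (mul_eq_zero.1 hX).resolve_left (X_ne_zero 0)

/-! ### The kernel of `D` modulo its image -/

/-- The exponent of `(y₀y₁y₂)^m`. -/
noncomputable def mmm (m : ℕ) : Fin 3 →₀ ℕ := Finsupp.equivFunOnFinite.symm fun _ => m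

/-- At `z = 1` the kernel of `D` in degree `3m` lies on the line spanned by
`(y₀y₁y₂)^m`. -/
theorem Φ_of_D_eq_zero {ζ : ℂ} (h1 : ζ ^ 2 = -1 - ζ) (h2 : ζ.im ≠ 0) {m : ℕ}
    {f : MvPolynomial (Fin 4) ℂ} (hf : IsWeightedHomogeneous xdeg f (3 * m)) (hD : D f = 0) :
    Φ ζ f = monomial (mmm m) (coeff (mmm m) (Φ ζ f)) := by
  classical
  -- Euler's identity in the `y`-coordinates records the homogeneity of `Φ ζ f`.
  have hE : diag 1 (Φ ζ f) = ((3 * m : ℕ) : ℂ) • Φ ζ f := by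
    have e1 : mkDerivation ℂ ![0, X 1, X 2, X 3] f = ((3 * m : ℕ) : ℂ) • f := by
      have := hf.sum_weight_X_mul_pderiv
      rw [mkDerivation_eq_sum]
      rw [Fin.sum_univ_four] at this ⊢
      rw [Nat.cast_smul_eq_nsmul, ← this]
      simp
    have e2 : Φ ζ (mkDerivation ℂ ![0, X 1, X 2, X 3] f) = diag 1 (Φ ζ f) := by
      refine hom_derivation_comm _ _ _ (fun i => ?_) f
      fin_cases i
      · simp [Φ, diag]
      · simp [Φ, diag]
      · simp [Φ, diag]
      · simp [Φ, diag]
    rw [← e2, e1, map_smul]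
  have hδ := Φ_D h1 f
  rw [hD, map_zero] at hδ
  ext s
  rw [coeff_monomial]
  split_ifs with hs
  · rw [hs]
  by_contra hc
  have c1 := congrArg (coeff s) hδ
  have c2 := congrArg (coeff s) hE
  rw [coeff_diag, coeff_zero, Fin.sum_univ_three] at c1
  rw [coeff_diag, coeff_smul, smul_eq_mul, Fin.sum_univ_three] at c2
  have d1 := (mul_eq_zero.1 c1.symm).resolve_right hc
  have d2 := mul_right_cancel₀ hc c2
  simp at d1 d2
  obtain ⟨e1, e2⟩ := balanced h1 h2 d1
  have e3 : s 0 + s 1 + s 2 = 3 * m := by exact_mod_cast d2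
  apply hs
  ext i
  fin_cases i
  · simp [mmm]; omega
  · simp [mmm]; omega
  · simp [mmm]; omega

/-- A nonzero element of `ker D` of degree `3m` is a multiple of `z^j N^m` with `N` the norm form;
since `N^m` contains `x₂^(3m)`, its weight is `6m + 3j`. -/
theorem weight_of_D_eq_zero {m v : ℕ} {f : MvPolynomial (Fin 4) ℂ}
    (hf : IsWeightedHomogeneous xdeg f (3 * m)) (hv : IsWeightedHomogeneous wt f v)
    (hD : D f = 0) (h0 : f ≠ 0) : ∃ j, v = 6 * m + 3 * j := by
  obtain ⟨ζ, h1, h2⟩ := exists_zeta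
  have hΦ := Φ_of_D_eq_zero h1 h2 hf hD
  have hc : coeff (mmm m) (Φ ζ f) ≠ 0 := by
    intro hc
    rw [hc, monomial_zero] at hΦ
    exact h0 (eq_zero_of_Φ h1 hv hΦ)
  have hev : eval ![1, 0, 0, 1] f ≠ 0 := by
    rw [eval_Φ h1, hΦ, eval_monomial]
    refine mul_ne_zero hc ?_
    rw [Finsupp.prod_fintype _ _ (by simp), Fin.prod_univ_three]
    simp
  rw [eval_eq'] at hev
  obtain ⟨s, hs, hne⟩ := Finset.exists_ne_zero_of_sum_ne_zero hev
  have hs1 := hf (mem_support_iff.1 hs)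
  have hs2 := hv (mem_support_iff.1 hs)
  rw [weight_xdeg] at hs1
  rw [weight_wt] at hs2
  rw [Fin.prod_univ_four] at hne
  have k1 : s 1 = 0 := by
    by_contra hh
    exact hne (by simp [hh])
  have k2 : s 2 = 0 := by
    by_contra hh
    exact hne (by simp [hh])
  exact ⟨s 0, by omega⟩

/-- `z∂_z` induces an injection from `ker D` to `coker D` in positive degree divisible by `3`: it
multiplies the class of `z^j N^m` by `j + m`. -/
theorem eq_zero_of_E_mem {m v : ℕ} (hm : 0 < m) {f g : MvPolynomial (Fin 4) ℂ}
    (hf : IsWeightedHomogeneous xdeg f (3 * m)) (hv : IsWeightedHomogeneous wt f v)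
    (hD : D f = 0) (hE : E f = D g) : f = 0 := by
  by_contra h0
  obtain ⟨j, hj⟩ := weight_of_D_eq_zero hf hv hD h0
  obtain ⟨ζ, h1, h2⟩ := exists_zeta
  have hΦ := Φ_of_D_eq_zero h1 h2 hf hD
  have euler : 3 * E f + S f = (v : MvPolynomial (Fin 4) ℂ) * f := by
    have := hv.sum_weight_X_mul_pderiv
    rw [Fin.sum_univ_four] at this
    rw [E_apply, S, mkDerivation_eq_sum, Fin.sum_univ_four, ← nsmul_eq_mul, ← this]
    simp [wt]
    ring
  have h3 := congrArg (coeff (mmm m)) (congrArg (Φ ζ) euler)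
  have e3 : (3 : MvPolynomial (Fin 3) ℂ) = C 3 := (map_ofNat C 3).symm
  have ev : (v : MvPolynomial (Fin 3) ℂ) = C (v : ℂ) := (map_natCast C v).symm
  rw [map_add, map_mul, map_mul, map_ofNat, map_natCast, hE, Φ_D h1, Φ_S h1, coeff_add, e3, ev,
    coeff_C_mul, coeff_C_mul, coeff_diag] at h3
  have hW : coeff (mmm m) (W ζ (Φ ζ f)) = (3 * m : ℕ) * coeff (mmm m) (Φ ζ f) := by
    conv_lhs => rw [hΦ]
    rw [coeff_W_monomial]
    simp [mmm]
    left
    ring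
  have hsum : ∑ i, (![1, ζ, ζ ^ 2] : Fin 3 → ℂ) i * (mmm m i : ℂ) = 0 := by
    rw [Fin.sum_univ_three]
    simp [mmm]
    linear_combination (m : ℂ) * h1
  rw [hW, hsum, zero_mul, mul_zero, zero_add] at h3
  have hc : coeff (mmm m) (Φ ζ f) ≠ 0 := by
    intro hc
    rw [hc, monomial_zero] at hΦ
    exact h0 (eq_zero_of_Φ h1 hv hΦ)
  have : 3 * m = v := by exact_mod_cast mul_right_cancel₀ hc h3
  omega

/-- The top-weight argument: if `θ f` has no components of weight `> w`, nor of weight `w` in case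
`3 ∣ w`, then `f` has no components of weight `≥ w`. -/
theorem component_eq_zero {m w : ℕ} (hm : 0 < m) {f : MvPolynomial (Fin 4) ℂ}
    (hf : f ∈ kloostermanPk₃ (3 * m))
    (h : ∀ v, w < v → weightedHomogeneousComponent wt v (kloostermanTheta₃ f) = 0)
    (hw : 3 ∣ w → weightedHomogeneousComponent wt w (kloostermanTheta₃ f) = 0) :
    ∀ v, w ≤ v → weightedHomogeneousComponent wt v f = 0 := by
  -- descending induction on the weight, starting above the top weight of `f`
  have key : ∀ i v, w ≤ v → weightedTotalDegree wt f < v + i →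
      weightedHomogeneousComponent wt v f = 0 := by
    intro i
    induction i with
    | zero => exact fun v _ hv => weightedHomogeneousComponent_eq_zero v f hv
    | succ i ih =>
      intro v hwv hv
      have hD : D (weightedHomogeneousComponent wt v f) = 0 := by
        have e := component_theta_succ f v
        rwa [h _ (by omega), ih (v + 1) (by omega) (by omega), map_zero, zero_add, eq_comm] at e
      by_contra hne
      have hmem := component_mem hf v
      have hwt := weightedHomogeneousComponent_isWeightedHomogeneous (w := wt) v f
      have hθ : weightedHomogeneousComponent wt v (kloostermanTheta₃ f) = 0 := by
        rcases hwv.lt_or_eq with hlt | rfl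
        · exact h v hlt
        · obtain ⟨j, hj⟩ := weight_of_D_eq_zero hmem hwt hD hne
          exact hw (by omega)
      apply hne
      cases v with
      | zero =>
        rw [component_theta_zero] at hθ
        exact eq_zero_of_E_mem (g := 0) hm hmem hwt hD (by rw [hθ, map_zero])
      | succ u =>
        rw [component_theta_succ] at hθ
        refine eq_zero_of_E_mem (g := -weightedHomogeneousComponent wt u f) hm hmem hwt hD ?_
        rw [map_neg]
        exact eq_neg_of_add_eq_zero_left hθ
  exact fun v hv => key (weightedTotalDegree wt f + 1) v hv (by omega)

/-! ### Counting monomials -/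

/-- Exponents of the monomials of degree `3m` in `x₀, x₁, x₂` and of weight less than `w`. -/
def expLT (m w : ℕ) : Set (Fin 4 →₀ ℕ) :=
  {s | s 1 + s 2 + s 3 = 3 * m ∧ 3 * s 0 + s 2 + 2 * s 3 < w}

/-- Exponents of the monomials of degree `3m` in `x₀, x₁, x₂` and of weight `w`. -/
def expEQ (m w : ℕ) : Set (Fin 4 →₀ ℕ) :=
  {s | s 1 + s 2 + s 3 = 3 * m ∧ 3 * s 0 + s 2 + 2 * s 3 = w}

theorem expLT_finite (m w : ℕ) : (expLT m w).Finite := by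
  classical
  refine (Set.finite_Icc (0 : Fin 4 →₀ ℕ)
    (Finsupp.equivFunOnFinite.symm fun _ => 3 * m + w)).subset fun s hs => ?_
  obtain ⟨h1, h2⟩ := hs
  refine ⟨zero_le, fun i => ?_⟩
  fin_cases i <;> simp <;> omega

theorem card_residue (s n : ℕ) :
    ((Finset.range n).filter fun c => (s + c) % 3 = 1).card = (n + 2 - (1 + 2 * s) % 3) / 3 := by
  induction n with
  | zero => simp; omega
  | succ n ih =>
    rw [Finset.range_add_one, Finset.filter_insert]
    split_ifs with h
    · rw [Finset.card_insert_of_notMem (by simp), ih]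
      omega
    · rw [ih]
      omega

/-- Pairs `(i, c)` with `c ≤ i ≤ 3m` and `i + c ≡ 1 (mod 3)`; `i` stands for the degree in
`x₁, x₂` and `c` for the degree in `x₂`. -/
def pairs (m : ℕ) : Finset (Σ _ : ℕ, ℕ) :=
  (Finset.range (3 * m + 1)).sigma fun i => (Finset.range (i + 1)).filter fun c => (i + c) % 3 = 1

theorem card_pairs (m : ℕ) : 2 * (pairs m).card = 3 * m * (m + 1) := by
  rw [pairs, Finset.card_sigma]
  simp only [card_residue]
  induction m with
  | zero => simp
  | succ m ih =>
    have e : 3 * (m + 1) + 1 = 3 * m + 1 + 1 + 1 + 1 := by ring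
    rw [e, Finset.sum_range_succ, Finset.sum_range_succ, Finset.sum_range_succ]
    have h1 : (3 * m + 1 + 1 + 2 - (1 + 2 * (3 * m + 1)) % 3) / 3 = m + 1 := by omega
    have h2 : (3 * m + 1 + 1 + 1 + 2 - (1 + 2 * (3 * m + 1 + 1)) % 3) / 3 = m + 1 := by omega
    have h3 : (3 * m + 1 + 1 + 1 + 1 + 2 - (1 + 2 * (3 * m + 1 + 1 + 1)) % 3) / 3 = m + 1 := by
      omega
    rw [h1, h2, h3]
    linarith

theorem ncard_expEQ {m w : ℕ} (hw : 6 * m ≤ w) (h3 : w % 3 = 1) :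
    (expEQ m w).ncard = (pairs m).card := by
  rw [← Set.ncard_coe_finset]
  refine Set.ncard_congr (fun s _ => ⟨s 2 + s 3, s 3⟩) ?_ ?_ ?_
  · rintro s ⟨h1, h2⟩
    simp only [pairs, Finset.coe_sigma, Set.mem_sigma_iff, Finset.mem_coe, Finset.mem_range,
      Finset.mem_filter]
    omega
  · rintro s t ⟨h1, h2⟩ ⟨h1', h2'⟩ h
    simp only [Sigma.mk.injEq, heq_eq_eq] at h
    ext i
    fin_cases i <;> simp <;> omega
  · rintro ⟨i, c⟩ h
    simp only [pairs, Finset.coe_sigma, Set.mem_sigma_iff, Finset.mem_coe, Finset.mem_range,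
      Finset.mem_filter] at h
    refine ⟨Finsupp.equivFunOnFinite.symm ![(w - i - c) / 3, 3 * m - i, i - c, c], ?_, ?_⟩
    · constructor <;> simp <;> omega
    · simp
      omega

/-! ### The weight filtration and the dimension of the cokernel -/

/-- The part of `P_{3m}` of weight less than `w`. -/
noncomputable def F (m w : ℕ) : Submodule ℂ (MvPolynomial (Fin 4) ℂ) :=
  restrictSupport ℂ (expLT m w)

theorem mem_F {m w : ℕ} {f : MvPolynomial (Fin 4) ℂ} :
    f ∈ F m w ↔ f ∈ kloostermanPk₃ (3 * m) ∧
      ∀ v, w ≤ v → weightedHomogeneousComponent wt v f = 0 := by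
  classical
  rw [F, mem_restrictSupport_iff]
  constructor
  · intro h
    refine ⟨fun s hs => ?_, fun v hv => ?_⟩
    · have := (h (mem_support_iff.2 hs)).1
      rw [← this]
      exact weight_xdeg s
    · ext s
      rw [coeff_weightedHomogeneousComponent, coeff_zero]
      split_ifs with hs
      · by_contra hne
        have := (h (mem_support_iff.2 hne)).2
        rw [weight_wt] at hs
        omega
      · rfl
  · rintro ⟨h1, h2⟩ s hs
    have hs' := mem_support_iff.1 hs
    refine ⟨?_, ?_⟩
    · rw [← weight_xdeg s]
      exact h1 hs'
    · by_contra hlt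
      have := congrArg (coeff s) (h2 (Finsupp.weight wt s) (by rw [weight_wt]; omega))
      rw [coeff_weightedHomogeneousComponent, if_pos rfl, coeff_zero] at this
      exact hs' this

instance F_finite (m w : ℕ) : FiniteDimensional ℂ (F m w) := by
  have := (expLT_finite m w).to_subtype
  exact Module.Finite.of_basis (basisRestrictSupport ℂ (expLT m w))

theorem finrank_F (m w : ℕ) : Module.finrank ℂ (F m w) = (expLT m w).ncard :=
  Module.finrank_eq_nat_card_basis (basisRestrictSupport ℂ (expLT m w))

theorem finrank_F_succ {m w : ℕ} (hw : 6 * m ≤ w) (h3 : w % 3 = 1) :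
    Module.finrank ℂ (F m (w + 1)) = Module.finrank ℂ (F m w) + (pairs m).card := by
  rw [finrank_F, finrank_F, ← ncard_expEQ hw h3]
  have hu : expLT m (w + 1) = expLT m w ∪ expEQ m w := by
    ext s
    simp only [expLT, expEQ, Set.mem_union, Set.mem_ofPred]
    omega
  have hfin : (expEQ m w).Finite :=
    (expLT_finite m (w + 1)).subset (hu ▸ Set.subset_union_right)
  rw [hu, Set.ncard_union_eq _ (expLT_finite m w) hfin]
  rw [Set.disjoint_left]
  rintro s ⟨_, h⟩ ⟨_, h'⟩
  omega

/-- If an injective `θ : P → P` is strictly compatible, with shift one, with an exhaustive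
filtration `A` of `P` by finite-dimensional subspaces, at arbitrarily large steps all having jump
`d`, then the cokernel of `θ` has dimension `d`: it is the increasing union of the images of the
`A (w + 1)`, each of dimension `d`. -/
theorem finrank_coker {V : Type*} [AddCommGroup V] [Module ℂ V] (P : Submodule ℂ V)
    (θ : V →ₗ[ℂ] V) (A : ℕ → Submodule ℂ V) [∀ w, FiniteDimensional ℂ (A w)] (good : ℕ → Prop)
    (d : ℕ) (hinj : Set.InjOn θ P) (hmono : Monotone A) (hAP : ∀ w, A w ≤ P)
    (hex : ∀ f ∈ P, ∃ w, f ∈ A w) (hgood : ∀ n, ∃ w, n ≤ w ∧ good w)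
    (hθ : ∀ w, ∀ f ∈ A w, θ f ∈ A (w + 1))
    (hstrict : ∀ w, good w → ∀ f ∈ P, θ f ∈ A (w + 1) → f ∈ A w)
    (hdim : ∀ w, good w → Module.finrank ℂ (A (w + 1)) = Module.finrank ℂ (A w) + d) :
    FiniteDimensional ℂ (P ⧸ Submodule.comap P.subtype (Submodule.map θ P)) ∧
      Module.finrank ℂ (P ⧸ Submodule.comap P.subtype (Submodule.map θ P)) = d := by
  set Q := Submodule.comap P.subtype (Submodule.map θ P) with hQ
  let g : ∀ w, A (w + 1) →ₗ[ℂ] P ⧸ Q := fun w => Q.mkQ ∘ₗ Submodule.inclusion (hAP (w + 1))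
  have hrank : ∀ w, good w → Module.finrank ℂ (LinearMap.range (g w)) = d := by
    intro w hw
    have hker : Module.finrank ℂ (LinearMap.ker (g w)) = Module.finrank ℂ (A w) := by
      -- `θ` identifies `A w` with the kernel of `A (w + 1) → coker θ`.
      let φ : A w →ₗ[ℂ] A (w + 1) :=
        (θ ∘ₗ (A w).subtype).codRestrict (A (w + 1)) fun f => hθ w f f.2
      have hφ : Function.Injective φ := by
        intro a b hab
        have := congrArg Subtype.val hab
        exact Subtype.ext (hinj (hAP w a.2) (hAP w b.2) this)
      have hrange : LinearMap.ker (g w) = LinearMap.range φ := by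
        ext x
        constructor
        · intro hx
          have hx' : Submodule.inclusion (hAP (w + 1)) x ∈ Q := by
            rw [LinearMap.mem_ker] at hx
            exact (Submodule.Quotient.mk_eq_zero Q).1 hx
          obtain ⟨f, hf, hfx⟩ := hx'
          have hfx' : θ f = x := hfx
          exact ⟨⟨f, hstrict w hw f hf (hfx' ▸ x.2)⟩, Subtype.ext hfx'⟩
        · rintro ⟨f, rfl⟩
          rw [LinearMap.mem_ker]
          exact (Submodule.Quotient.mk_eq_zero Q).2 ⟨f, hAP w f.2, rfl⟩
      rw [hrange, LinearMap.finrank_range_of_inj hφ]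
    have := LinearMap.finrank_range_add_finrank_ker (g w)
    rw [hker, hdim w hw] at this
    omega
  have hle : ∀ w w', w ≤ w' → LinearMap.range (g w) ≤ LinearMap.range (g w') := by
    rintro w w' hww _ ⟨x, rfl⟩
    exact ⟨⟨x, hmono (by omega) x.2⟩, rfl⟩
  obtain ⟨w₀, -, hw₀⟩ := hgood 0
  have htop : LinearMap.range (g w₀) = ⊤ := by
    rw [eq_top_iff]
    rintro c -
    obtain ⟨⟨f, hf⟩, rfl⟩ := Submodule.mkQ_surjective Q c
    obtain ⟨u, hu⟩ := hex f hf
    obtain ⟨w, hw, hgw⟩ := hgood (max w₀ u)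
    have heq := Submodule.eq_of_le_of_finrank_eq (hle w₀ w (le_trans (le_max_left _ _) hw))
      (by rw [hrank w₀ hw₀, hrank w hgw])
    rw [heq]
    exact ⟨⟨f, hmono (le_trans (le_max_right _ _) (hw.trans (Nat.le_succ w))) hu⟩, rfl⟩
  have hfin : FiniteDimensional ℂ (P ⧸ Q) :=
    Module.Finite.of_surjective (g w₀) (LinearMap.range_eq_top.1 htop)
  refine ⟨hfin, ?_⟩
  rw [← hrank w₀ hw₀, htop, finrank_top]

theorem theta_injOn {m : ℕ} (hm : 0 < m) :
    Set.InjOn kloostermanTheta₃ (kloostermanPk₃ (3 * m)) := by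
  intro a ha b hb hab
  have h0 : kloostermanTheta₃ (a - b) = 0 := by rw [map_sub, hab, sub_self]
  have hmem : a - b ∈ kloostermanPk₃ (3 * m) := Submodule.sub_mem _ ha hb
  have hc := component_eq_zero (w := 0) hm hmem (fun v _ => by rw [h0, map_zero])
    (fun _ => by rw [h0, map_zero])
  have hF : a - b ∈ F m 0 := mem_F.2 ⟨hmem, hc⟩
  have he : expLT m 0 = ∅ := by
    ext s
    simp [expLT]
  rw [F, he, mem_restrictSupport_iff] at hF
  have : (a - b).support = ∅ := by
    rw [← Finset.coe_eq_empty]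
    exact Set.subset_empty_iff.1 hF
  exact sub_eq_zero.1 (support_eq_empty.1 this)

end Kloosterman

/-- Let `k ≥ 1` be divisible by `3`, and take `n = 2`.  Then
`θ = z∂_z + D` is injective on `P_k`, maps `P_k` into `P_k`, and its cokernel on `P_k` is
a finite-dimensional `ℂ`-vector space of dimension `k(k+3)/6`. -/
theorem kloosterman_deRham_dimension_n_two (k : ℕ) (hk : 1 ≤ k) (h3 : 3 ∣ k) :
    Set.InjOn (kloostermanTheta₃) (kloostermanPk₃ k) ∧
    Submodule.map kloostermanTheta₃ (kloostermanPk₃ k) ≤ kloostermanPk₃ k ∧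
    FiniteDimensional ℂ
      (↥(kloostermanPk₃ k) ⧸
        Submodule.comap (kloostermanPk₃ k).subtype
          (Submodule.map kloostermanTheta₃ (kloostermanPk₃ k))) ∧
    Module.finrank ℂ
      (↥(kloostermanPk₃ k) ⧸
        Submodule.comap (kloostermanPk₃ k).subtype
          (Submodule.map kloostermanTheta₃ (kloostermanPk₃ k))) = k * (k + 3) / 6 := by
  obtain ⟨m, rfl⟩ := h3
  have hm : 0 < m := by omega
  have hcard : 3 * m * (3 * m + 3) / 6 = (Kloosterman.pairs m).card := by
    have h := Kloosterman.card_pairs m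
    have e : 3 * m * (3 * m + 3) = 6 * (Kloosterman.pairs m).card := by
      linarith
    rw [e, Nat.mul_div_cancel_left _ (by norm_num)]
  rw [hcard]
  refine ⟨Kloosterman.theta_injOn hm, ?_, ?_⟩
  · rintro _ ⟨f, hf, rfl⟩
    exact Kloosterman.theta_mem hf
  refine Kloosterman.finrank_coker (kloostermanPk₃ (3 * m)) kloostermanTheta₃ (Kloosterman.F m)
    (fun w => 6 * m ≤ w ∧ w % 3 = 1) _ (Kloosterman.theta_injOn hm) ?_ ?_ ?_ ?_ ?_ ?_ ?_
  · intro w w' hww f hf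
    rw [Kloosterman.mem_F] at hf ⊢
    exact ⟨hf.1, fun v hv => hf.2 v (hww.trans hv)⟩
  · exact fun w f hf => (Kloosterman.mem_F.1 hf).1
  · exact fun f hf => ⟨weightedTotalDegree Kloosterman.wt f + 1, Kloosterman.mem_F.2
      ⟨hf, fun v hv => weightedHomogeneousComponent_eq_zero v f (by omega)⟩⟩
  · exact fun n => ⟨3 * (n + 2 * m) + 1, by omega, by omega, by omega⟩
  · intro w f hf
    rw [Kloosterman.mem_F] at hf ⊢
    refine ⟨Kloosterman.theta_mem hf.1, fun v hv => ?_⟩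
    obtain ⟨u, rfl⟩ : ∃ u, v = u + 1 := ⟨v - 1, by omega⟩
    rw [Kloosterman.component_theta_succ, hf.2 u (by omega), hf.2 (u + 1) (by omega), map_zero,
      map_zero, add_zero]
  · intro w hw f hf hθ
    rw [Kloosterman.mem_F] at hθ ⊢
    exact ⟨hf, Kloosterman.component_eq_zero hm hf (fun v hv => hθ.2 v hv) (fun h => by omega)⟩
  · exact fun w hw => Kloosterman.finrank_F_succ hw.1 hw.2
end
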